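/- arXiv:2007.06148 — 4 statements merged into one kernel-verified Lean document; each statement's English description precedes it below -/
import Mathlib

section
/- Let Ω_SC := {(a₁,a₂) ∈ ℝ² : a₁a₂ = 0} be the switching cone. For every a = (a₁,a₂) ∈ Ω_SC, the tangent cone to Ω_SC at a is given by: T_{Ω_SC}(a) = {0}×ℝ if a₁ = 0 and a₂ ≠ 0; T_{Ω_SC}(a) = Ω_SC if a₁ = a₂ = 0; and T_{Ω_SC}(a) = ℝ×{0} if a₁ ≠ 0 and a₂ = 0. -/
open Filter Topology

/-- The switching cone `Ω_SC = {(a₁, a₂) ∈ ℝ² : a₁ a₂ = 0}`. -/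
def OmegaSC : Set (ℝ × ℝ) := {a | a.1 * a.2 = 0}

/-- The tangent (Bouligand) cone to `A` at `x`:
`{d : ∃ tₖ ↓ 0, dₖ → d with x + tₖ dₖ ∈ A for all k}`. -/
def tangentConeSC (A : Set (ℝ × ℝ)) (x : ℝ × ℝ) : Set (ℝ × ℝ) :=
  {d | ∃ (t : ℕ → ℝ) (dk : ℕ → ℝ × ℝ), (∀ k, 0 < t k) ∧ Tendsto t atTop (𝓝 0) ∧
        Tendsto dk atTop (𝓝 d) ∧ ∀ k, x + t k • dk k ∈ A}

/-- The regular (Fréchet) normal cone to `A` at `x`: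
`{ζ : ⟨ζ, y − x⟩ ≤ o(‖y − x‖) for y ∈ A}`. -/
def frechetNormalSC (A : Set (ℝ × ℝ)) (x : ℝ × ℝ) : Set (ℝ × ℝ) :=
  {z | ∀ ε > (0 : ℝ), ∃ δ > (0 : ℝ), ∀ y ∈ A, ‖y - x‖ < δ →
        z.1 * (y.1 - x.1) + z.2 * (y.2 - x.2) ≤ ε * ‖y - x‖}

/-- The limiting (Mordukhovich) normal cone to `A` at `x`. -/
def limitingNormalSC (A : Set (ℝ × ℝ)) (x : ℝ × ℝ) : Set (ℝ × ℝ) :=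
  {z | ∃ (xk zk : ℕ → ℝ × ℝ), (∀ k, xk k ∈ A) ∧ Tendsto xk atTop (𝓝 x) ∧
        Tendsto zk atTop (𝓝 z) ∧ ∀ k, zk k ∈ frechetNormalSC A (xk k)}

/-- The directional limiting normal cone `N_A(x; d)`. -/
def dirNormalSC (A : Set (ℝ × ℝ)) (x d : ℝ × ℝ) : Set (ℝ × ℝ) :=
  {z | ∃ (t : ℕ → ℝ) (dk zk : ℕ → ℝ × ℝ),
        (∀ k, 0 < t k) ∧ Tendsto t atTop (𝓝 0) ∧ Tendsto dk atTop (𝓝 d) ∧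
        Tendsto zk atTop (𝓝 z) ∧
        ∀ k, x + t k • dk k ∈ A ∧ zk k ∈ frechetNormalSC A (x + t k • dk k)}

/-- The cone `N^i_A(x; d)` from the definition of directional regularity. -/
def dirNormalISC (A : Set (ℝ × ℝ)) (x d : ℝ × ℝ) : Set (ℝ × ℝ) :=
  {z | ∀ t : ℕ → ℝ, (∀ k, 0 < t k) → Tendsto t atTop (𝓝 0) →
        ∃ (dk zk : ℕ → ℝ × ℝ), Tendsto dk atTop (𝓝 d) ∧ Tendsto zk atTop (𝓝 z) ∧
          ∀ k, x + t k • dk k ∈ A ∧ zk k ∈ frechetNormalSC A (x + t k • dk k)}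

/-!
`Ω_SC` is the zero set of `(y₁, y₂) ↦ y₁ y₂`, so a tangent vector `d` at `a` is annihilated by the
derivative there: `a₁ d₂ + a₂ d₁ = 0`. If `a ≠ 0` this equation says that `d` is parallel to the
branch of the cross containing `a`, and then the whole line `a + ℝ d` lies in `Ω_SC`. At the origin
the equation is vacuous, but a closed cone is its own tangent cone at its apex.
-/

section TangentCone

variable {A : Set (ℝ × ℝ)} {x d : ℝ × ℝ}

theorem mem_tangentConeSC_of_frequently_mem (h : ∃ᶠ t : ℝ in 𝓝[>] 0, x + t • d ∈ A) :
    d ∈ tangentConeSC A x := by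
  obtain ⟨t, ht, htA⟩ := exists_seq_forall_of_frequently (h.and_eventually self_mem_nhdsWithin)
  exact ⟨t, fun _ => d, fun k => (htA k).2, tendsto_nhds_of_tendsto_nhdsWithin ht,
    tendsto_const_nhds, fun k => (htA k).1⟩

theorem mem_tangentConeSC_of_forall_pos_mem (h : ∀ t : ℝ, 0 < t → x + t • d ∈ A) :
    d ∈ tangentConeSC A x :=
  mem_tangentConeSC_of_frequently_mem
    (eventually_nhdsWithin_of_forall (s := Set.Ioi 0) h).frequently

theorem tangentConeSC_subset_tangentConeAt : tangentConeSC A x ⊆ tangentConeAt ℝ A x := by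
  rintro d ⟨t, dk, ht_pos, ht, hdk, hmem⟩
  have h_step : Tendsto (fun k => t k • dk k) atTop (𝓝 0) := by simpa using ht.smul hdk
  refine mem_tangentConeAt_of_seq atTop (fun k => (t k)⁻¹) _ h_step (.of_forall hmem) ?_
  simpa only [inv_smul_smul₀ (ht_pos _).ne'] using hdk

theorem apply_eq_zero_of_mem_tangentConeSC {F : Type*} [NormedAddCommGroup F] [NormedSpace ℝ F]
    {f : ℝ × ℝ → F} {f' : ℝ × ℝ →L[ℝ] F} {c : F} (hf : HasFDerivWithinAt f f' A x)
    (hfA : Set.EqOn f (fun _ => c) A) (hx : x ∈ A) (hd : d ∈ tangentConeSC A x) : f' d = 0 :=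
  hf.unique_on ((hasFDerivWithinAt_const c x A).congr' hfA hx)
    (tangentConeSC_subset_tangentConeAt hd)

theorem tangentConeSC_zero_of_isClosed (hA : IsClosed A)
    (hcone : ∀ t : ℝ, 0 < t → ∀ y ∈ A, t • y ∈ A) : tangentConeSC A 0 = A := by
  refine Set.Subset.antisymm ?_ fun d hd => mem_tangentConeSC_of_forall_pos_mem fun t ht => by
    simpa only [zero_add] using hcone t ht d hd
  rintro d ⟨t, dk, ht_pos, -, hdk, hmem⟩
  have hdk_mem : ∀ k, dk k ∈ A := fun k => by
    simpa only [zero_add, inv_smul_smul₀ (ht_pos k).ne'] using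
      hcone (t k)⁻¹ (inv_pos.2 (ht_pos k)) _ (hmem k)
  exact hA.mem_of_tendsto hdk (.of_forall hdk_mem)

end TangentCone

section SwitchingCone

variable {a d : ℝ × ℝ}

theorem mem_omegaSC : a ∈ OmegaSC ↔ a.1 * a.2 = 0 := Iff.rfl

theorem isClosed_omegaSC : IsClosed OmegaSC :=
  isClosed_eq (continuous_fst.mul continuous_snd) continuous_const

theorem smul_mem_omegaSC (t : ℝ) (hd : d ∈ OmegaSC) : t • d ∈ OmegaSC := by
  rw [mem_omegaSC] at hd ⊢
  calc t * d.1 * (t * d.2) = t ^ 2 * (d.1 * d.2) := by ring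
    _ = 0 := by rw [hd, mul_zero]

theorem add_smul_mem_omegaSC (ha : a ∈ OmegaSC) (hd : d ∈ OmegaSC)
    (had : a.1 * d.2 + a.2 * d.1 = 0) (t : ℝ) : a + t • d ∈ OmegaSC := by
  rw [mem_omegaSC] at ha hd ⊢
  calc (a.1 + t * d.1) * (a.2 + t * d.2)
      = a.1 * a.2 + t * (a.1 * d.2 + a.2 * d.1) + t ^ 2 * (d.1 * d.2) := by ring
    _ = 0 := by rw [ha, hd, had]; ring

theorem tangentConeSC_omegaSC_zero : tangentConeSC OmegaSC 0 = OmegaSC :=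
  tangentConeSC_zero_of_isClosed isClosed_omegaSC fun t _ _ hd => smul_mem_omegaSC t hd

theorem mul_add_mul_eq_zero_of_mem_tangentConeSC_omegaSC (ha : a ∈ OmegaSC)
    (hd : d ∈ tangentConeSC OmegaSC a) : a.1 * d.2 + a.2 * d.1 = 0 := by
  have h_deriv : HasFDerivAt (fun y : ℝ × ℝ => y.1 * y.2)
      (a.1 • ContinuousLinearMap.snd ℝ ℝ ℝ + a.2 • ContinuousLinearMap.fst ℝ ℝ ℝ) a :=
    hasFDerivAt_fst.mul hasFDerivAt_snd
  exact apply_eq_zero_of_mem_tangentConeSC h_deriv.hasFDerivWithinAt (fun _ hy => hy) ha hd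

theorem mem_omegaSC_of_mul_add_mul_eq_zero (ha : a ∈ OmegaSC) (ha₀ : a ≠ 0)
    (had : a.1 * d.2 + a.2 * d.1 = 0) : d ∈ OmegaSC := by
  rcases mul_eq_zero.1 ha with h₁ | h₂
  · have h₂ : a.2 ≠ 0 := fun h₂ => ha₀ (Prod.ext h₁ h₂)
    have hd₁ : d.1 = 0 := by simpa [h₁, h₂] using had
    rw [mem_omegaSC, hd₁, zero_mul]
  · have h₁ : a.1 ≠ 0 := fun h₁ => ha₀ (Prod.ext h₁ h₂)
    have hd₂ : d.2 = 0 := by simpa [h₁, h₂] using had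
    rw [mem_omegaSC, hd₂, mul_zero]

theorem tangentConeSC_omegaSC_of_ne_zero (ha : a ∈ OmegaSC) (ha₀ : a ≠ 0) :
    tangentConeSC OmegaSC a = {d | a.1 * d.2 + a.2 * d.1 = 0} :=
  Set.Subset.antisymm (fun _ hd => mul_add_mul_eq_zero_of_mem_tangentConeSC_omegaSC ha hd)
    fun _ had => mem_tangentConeSC_of_forall_pos_mem fun t _ =>
      add_smul_mem_omegaSC ha (mem_omegaSC_of_mul_add_mul_eq_zero ha ha₀ had) had t

end SwitchingCone

/-- the tangent cone to the switching cone. -/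
theorem tangentCone_omegaSC (a : ℝ × ℝ) (ha : a ∈ OmegaSC) :
    (a.1 = 0 ∧ a.2 ≠ 0 → tangentConeSC OmegaSC a = {d : ℝ × ℝ | d.1 = 0}) ∧
    (a.1 = 0 ∧ a.2 = 0 → tangentConeSC OmegaSC a = OmegaSC) ∧
    (a.1 ≠ 0 ∧ a.2 = 0 → tangentConeSC OmegaSC a = {d : ℝ × ℝ | d.2 = 0}) := by
  refine ⟨fun ⟨h₁, h₂⟩ => ?_, fun ⟨h₁, h₂⟩ => ?_, fun ⟨h₁, h₂⟩ => ?_⟩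
  · have ha₀ : a ≠ 0 := fun h => h₂ (congrArg Prod.snd h)
    rw [tangentConeSC_omegaSC_of_ne_zero ha ha₀]
    ext d
    simp [h₁, h₂]
  · obtain rfl : a = 0 := Prod.ext h₁ h₂
    exact tangentConeSC_omegaSC_zero
  · have ha₀ : a ≠ 0 := fun h => h₁ (congrArg Prod.fst h)
    rw [tangentConeSC_omegaSC_of_ne_zero ha ha₀]
    ext d
    simp [h₁, h₂]
end

section
/- Let z* be a local minimizer of the MPSC which is AM-regular. Then z* is M-stationary: there exist multipliers (λ^g, λ^h, λ^G, λ^H) with 0 = ∇f(z*) + Σ_{i∈I_g*} λ_i^g ∇g_i(z*) + Σ_{j=1}^q λ_j^h ∇h_j(z*) + Σ_{i=1}^m (λ_i^G ∇G_i(z*) + λ_i^H ∇H_i(z*)), λ_i^g ≥ 0 for i ∈ I_g*, λ_i^G = 0 for i ∈ I_H*, λ_i^H = 0 for i ∈ I_G*, and λ_i^G λ_i^H = 0 for all i ∈ I_GH*. -/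
open scoped Classical InnerProductSpace
open Filter Topology

noncomputable section

/-- Euclidean space `ℝⁿ`. -/
abbrev Euc (n : ℕ) : Type := EuclideanSpace ℝ (Fin n)

/-- Data of a mathematical program with switching constraints (MPSC):
`min f(z)` s.t. `g(z) ≤ 0`, `h(z) = 0`, `Gᵢ(z)Hᵢ(z) = 0 (i = 1,…,m)`,
with all defining functions continuously differentiable (gradients `f'`, `g'`, … are
genuine gradient maps, and they are continuous). -/
structure MPSC (n p q m : ℕ) where
  f : Euc n → ℝ
  g : Fin p → Euc n → ℝ
  h : Fin q → Euc n → ℝ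
  G : Fin m → Euc n → ℝ
  H : Fin m → Euc n → ℝ
  f' : Euc n → Euc n
  g' : Fin p → Euc n → Euc n
  h' : Fin q → Euc n → Euc n
  G' : Fin m → Euc n → Euc n
  H' : Fin m → Euc n → Euc n
  grad_f : ∀ z, HasGradientAt f (f' z) z
  grad_g : ∀ i z, HasGradientAt (g i) (g' i z) z
  grad_h : ∀ j z, HasGradientAt (h j) (h' j z) z
  grad_G : ∀ i z, HasGradientAt (G i) (G' i z) z
  grad_H : ∀ i z, HasGradientAt (H i) (H' i z) z
  cont_f' : Continuous f'
  cont_g' : ∀ i, Continuous (g' i)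
  cont_h' : ∀ j, Continuous (h' j)
  cont_G' : ∀ i, Continuous (G' i)
  cont_H' : ∀ i, Continuous (H' i)

namespace MPSC

variable {n p q m : ℕ} (P : MPSC n p q m)

/-- The feasible region `F` of the MPSC. -/
def Feas : Set (Euc n) :=
  {z | (∀ i, P.g i z ≤ 0) ∧ (∀ j, P.h j z = 0) ∧ ∀ i, P.G i z * P.H i z = 0}

/-- Active inequality constraints `I_g*`. -/
def Ig (zs : Euc n) : Set (Fin p) := {i | P.g i zs = 0}

/-- `I_G* = {i : Gᵢ(z*) = 0, Hᵢ(z*) ≠ 0}`. -/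
def IGs (zs : Euc n) : Set (Fin m) := {i | P.G i zs = 0 ∧ P.H i zs ≠ 0}

/-- `I_H* = {i : Gᵢ(z*) ≠ 0, Hᵢ(z*) = 0}`. -/
def IHs (zs : Euc n) : Set (Fin m) := {i | P.G i zs ≠ 0 ∧ P.H i zs = 0}

/-- `I_GH* = {i : Gᵢ(z*) = Hᵢ(z*) = 0}`. -/
def IGH (zs : Euc n) : Set (Fin m) := {i | P.G i zs = 0 ∧ P.H i zs = 0}

/-- `I_g*(d)`. -/
def Igd (zs d : Euc n) : Set (Fin p) := {i | P.g i zs = 0 ∧ ⟪P.g' i zs, d⟫_ℝ = 0}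

/-- `I_G*(d)`. -/
def IGd (zs d : Euc n) : Set (Fin m) :=
  {i | i ∈ P.IGH zs ∧ ⟪P.G' i zs, d⟫_ℝ = 0 ∧ ⟪P.H' i zs, d⟫_ℝ ≠ 0}

/-- `I_H*(d)`. -/
def IHd (zs d : Euc n) : Set (Fin m) :=
  {i | i ∈ P.IGH zs ∧ ⟪P.G' i zs, d⟫_ℝ ≠ 0 ∧ ⟪P.H' i zs, d⟫_ℝ = 0}

/-- `I_GH*(d)`. -/
def IGHd (zs d : Euc n) : Set (Fin m) :=
  {i | i ∈ P.IGH zs ∧ ⟪P.G' i zs, d⟫_ℝ = 0 ∧ ⟪P.H' i zs, d⟫_ℝ = 0}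

/-- The linearization cone `L(z*)` of the MPSC at `z*`. -/
def LinCone (zs : Euc n) : Set (Euc n) :=
  {d | (∀ i ∈ P.Ig zs, ⟪P.g' i zs, d⟫_ℝ ≤ 0) ∧ (∀ j, ⟪P.h' j zs, d⟫_ℝ = 0) ∧
       (∀ i ∈ P.IGs zs, ⟪P.G' i zs, d⟫_ℝ = 0) ∧ (∀ i ∈ P.IHs zs, ⟪P.H' i zs, d⟫_ℝ = 0) ∧
       (∀ i ∈ P.IGH zs, ⟪P.G' i zs, d⟫_ℝ * ⟪P.H' i zs, d⟫_ℝ = 0)}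

/-- The critical cone `C(z*)`. -/
def Crit (zs : Euc n) : Set (Euc n) := {d ∈ P.LinCone zs | ⟪P.f' zs, d⟫_ℝ ≤ 0}

/-- `(λ^g, λ^h, λ^G, λ^H)` is an M-multiplier in direction `d` at `z*`. -/
def IsMMultDir (zs d : Euc n) (lg : Fin p → ℝ) (lh : Fin q → ℝ) (lG lH : Fin m → ℝ) : Prop :=
  ((0 : Euc n) = P.f' zs
      + (∑ i ∈ Finset.univ.filter (fun i => i ∈ P.Igd zs d), lg i • P.g' i zs)
      + (∑ j, lh j • P.h' j zs) + (∑ i, (lG i • P.G' i zs + lH i • P.H' i zs))) ∧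
  (∀ i ∈ P.Igd zs d, 0 ≤ lg i) ∧ (∀ i ∉ P.Igd zs d, lg i = 0) ∧
  (∀ i, i ∈ P.IHs zs ∪ P.IHd zs d → lG i = 0) ∧
  (∀ i, i ∈ P.IGs zs ∪ P.IGd zs d → lH i = 0) ∧
  ∀ i ∈ P.IGHd zs d, lG i * lH i = 0

/-- `z*` is M-stationary in direction `d`. -/
def MStatDir (zs d : Euc n) : Prop :=
  ∃ (lg : Fin p → ℝ) (lh : Fin q → ℝ) (lG lH : Fin m → ℝ), P.IsMMultDir zs d lg lh lG lH

/-- `z*` is S-stationary in direction `d`. -/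
def SStatDir (zs d : Euc n) : Prop :=
  ∃ (lg : Fin p → ℝ) (lh : Fin q → ℝ) (lG lH : Fin m → ℝ),
    P.IsMMultDir zs d lg lh lG lH ∧ ∀ i ∈ P.IGHd zs d, lG i = 0 ∧ lH i = 0

/-- MPSC-LICQ in direction `d` at `z*`. -/
def LICQd (zs d : Euc n) : Prop :=
  LinearIndependent ℝ
    (Sum.elim (fun i : {i // i ∈ P.Igd zs d} => P.g' i.1 zs)
      (Sum.elim (fun j : Fin q => P.h' j zs)
        (Sum.elim (fun i : {i // i ∈ P.IGs zs ∪ P.IGd zs d ∪ P.IGHd zs d} => P.G' i.1 zs)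
          (fun i : {i // i ∈ P.IHs zs ∪ P.IHd zs d ∪ P.IGHd zs d} => P.H' i.1 zs))))

/-- MPSC-LICQ at `z*`. -/
def LICQ (zs : Euc n) : Prop :=
  LinearIndependent ℝ
    (Sum.elim (fun i : {i // i ∈ P.Ig zs} => P.g' i.1 zs)
      (Sum.elim (fun j : Fin q => P.h' j zs)
        (Sum.elim (fun i : {i // i ∈ P.IGs zs ∪ P.IGH zs} => P.G' i.1 zs)
          (fun i : {i // i ∈ P.IHs zs ∪ P.IGH zs} => P.H' i.1 zs))))

/-- MPSC quasi-normality at `z*` in direction `d`. -/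
def QuasiNormalDir (zs d : Euc n) : Prop :=
  ∀ (lg : Fin p → ℝ) (lh : Fin q → ℝ) (lG lH : Fin m → ℝ),
    ((0 : Euc n) = (∑ i, lg i • P.g' i zs) + (∑ j, lh j • P.h' j zs)
        + (∑ i, (lG i • P.G' i zs + lH i • P.H' i zs))) →
    ((∀ i ∈ P.Igd zs d, 0 ≤ lg i) ∧ (∀ i ∉ P.Igd zs d, lg i = 0) ∧
      (∀ i, i ∈ P.IGs zs ∪ P.IGd zs d → lH i = 0) ∧
      (∀ i, i ∈ P.IHs zs ∪ P.IHd zs d → lG i = 0) ∧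
      ∀ i ∈ P.IGHd zs d, lG i * lH i = 0) →
    (∃ (dk : ℕ → Euc n) (t : ℕ → ℝ),
      Tendsto dk atTop (𝓝 d) ∧ (∀ k, 0 < t k) ∧ Tendsto t atTop (𝓝 0) ∧
      ∀ k, (∀ i, lg i ≠ 0 → 0 < lg i * P.g i (zs + t k • dk k)) ∧
        (∀ j, lh j ≠ 0 → 0 < lh j * P.h j (zs + t k • dk k)) ∧
        (∀ i, lG i ≠ 0 → 0 < lG i * P.G i (zs + t k • dk k)) ∧
        (∀ i, lH i ≠ 0 → 0 < lH i * P.H i (zs + t k • dk k))) →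
    lg = 0 ∧ lh = 0 ∧ lG = 0 ∧ lH = 0

/-- MPSC directional quasi-normality at `z*`: quasi-normality in every direction of
the linearization cone. -/
def DirQuasiNormal (zs : Euc n) : Prop := ∀ d ∈ P.LinCone zs, P.QuasiNormalDir zs d

/-- `(λ^g, λ^h, λ^G, λ^H)` is an S-multiplier at `z*` (S-stationarity conditions). -/
def IsSMult (zs : Euc n) (lg : Fin p → ℝ) (lh : Fin q → ℝ) (lG lH : Fin m → ℝ) : Prop :=
  ((0 : Euc n) = P.f' zs
      + (∑ i ∈ Finset.univ.filter (fun i => i ∈ P.Ig zs), lg i • P.g' i zs)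
      + (∑ j, lh j • P.h' j zs) + (∑ i, (lG i • P.G' i zs + lH i • P.H' i zs))) ∧
  (∀ i ∈ P.Ig zs, 0 ≤ lg i) ∧ (∀ i ∈ P.IHs zs, lG i = 0) ∧ (∀ i ∈ P.IGs zs, lH i = 0) ∧
  ∀ i ∈ P.IGH zs, lG i = 0 ∧ lH i = 0

/-- `(λ^g, λ^h, λ^G, λ^H)` is an M-multiplier at `z*` (M-stationarity conditions). -/
def IsMMult (zs : Euc n) (lg : Fin p → ℝ) (lh : Fin q → ℝ) (lG lH : Fin m → ℝ) : Prop :=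
  ((0 : Euc n) = P.f' zs
      + (∑ i ∈ Finset.univ.filter (fun i => i ∈ P.Ig zs), lg i • P.g' i zs)
      + (∑ j, lh j • P.h' j zs) + (∑ i, (lG i • P.G' i zs + lH i • P.H' i zs))) ∧
  (∀ i ∈ P.Ig zs, 0 ≤ lg i) ∧ (∀ i ∈ P.IHs zs, lG i = 0) ∧ (∀ i ∈ P.IGs zs, lH i = 0) ∧
  ∀ i ∈ P.IGH zs, lG i * lH i = 0

/-- The rank `r(z*; d)` of the relevant family of gradients. -/
def rankd (zs d : Euc n) : ℕ :=
  Set.finrank ℝ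
    ((fun i => P.g' i zs) '' P.Igd zs d ∪ Set.range (fun j => P.h' j zs) ∪
      (fun i => P.G' i zs) '' (P.IGs zs ∪ P.IGd zs d ∪ P.IGHd zs d) ∪
      (fun i => P.H' i zs) '' (P.IHs zs ∪ P.IHd zs d ∪ P.IGHd zs d))

/-- `(J_g, J_G, J_H)` is an MPSC working set in direction `d`. -/
def IsWorkingSet (zs d : Euc n) (Jg : Finset (Fin p)) (JG JH : Finset (Fin m)) : Prop :=
  (∀ i ∈ Jg, i ∈ P.Igd zs d) ∧
  (∀ i ∈ JG, i ∈ P.IGs zs ∪ P.IGd zs d ∪ P.IGHd zs d) ∧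
  (∀ i ∈ JH, i ∈ P.IHs zs ∪ P.IHd zs d ∪ P.IGHd zs d) ∧
  JG ∪ JH = Finset.univ ∧
  Jg.card + q + JG.card + JH.card = P.rankd zs d ∧
  LinearIndependent ℝ
    (Sum.elim (fun i : {i // i ∈ Jg} => P.g' i.1 zs)
      (Sum.elim (fun j : Fin q => P.h' j zs)
        (Sum.elim (fun i : {i // i ∈ JG} => P.G' i.1 zs)
          (fun i : {i // i ∈ JH} => P.H' i.1 zs))))

/-- `z*` is strongly M-stationary in direction `d`. -/
def StronglyMStatDir (zs d : Euc n) : Prop :=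
  ∃ (Jg : Finset (Fin p)) (JG JH : Finset (Fin m)) (lg : Fin p → ℝ) (lh : Fin q → ℝ)
    (lG lH : Fin m → ℝ),
    P.IsWorkingSet zs d Jg JG JH ∧ P.IsMMultDir zs d lg lh lG lH ∧
    (∀ i ∉ Jg, lg i = 0) ∧ (∀ i ∉ JG, lG i = 0) ∧ (∀ i ∉ JH, lH i = 0) ∧
    ∀ i ∈ JG ∩ JH, lG i = 0 ∧ lH i = 0

/-- The MPSC constraint-violation residual. -/
def residual (z : Euc n) : ℝ :=
  (∑ i, max (P.g i z) 0) + (∑ j, |P.h j z|) + ∑ i, min |P.G i z| |P.H i z|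

/-- The MPSC local error bound property around `z*`. -/
def ErrorBound (zs : Euc n) : Prop :=
  ∃ V ∈ 𝓝 zs, ∃ α > (0 : ℝ), ∀ z ∈ V, Metric.infDist z P.Feas ≤ α * P.residual z

/-- Equality-constraint gradients (at `z`) of the branch problem `NLP(β₁, β₂)`. -/
def EqGrads (zs : Euc n) (b1 b2 : Set (Fin m)) (z : Euc n) : Set (Euc n) :=
  Set.range (fun j => P.h' j z) ∪ (fun i => P.G' i z) '' (P.IGs zs ∪ b1) ∪
    (fun i => P.H' i z) '' (P.IHs zs ∪ b2)

/-- The index set `I⁻` of the branch problem `NLP(β₁, β₂)` at `z*`. -/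
def Iminus (zs : Euc n) (b1 b2 : Set (Fin m)) : Set (Fin p) :=
  {l | l ∈ P.Ig zs ∧
    ∃ (lh : Fin q → ℝ) (lG lH : Fin m → ℝ) (mu : Fin p → ℝ),
      (∀ i, i ∉ P.IGs zs ∪ b1 → lG i = 0) ∧ (∀ i, i ∉ P.IHs zs ∪ b2 → lH i = 0) ∧
      (∀ i, 0 ≤ mu i) ∧ (∀ i, ¬(i ∈ P.Ig zs ∧ i ≠ l) → mu i = 0) ∧
      -(P.g' l zs) = (∑ j, lh j • P.h' j zs)
        + (∑ i, (lG i • P.G' i zs + lH i • P.H' i zs)) + (∑ i, mu i • P.g' i zs)}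

/-- CRSC holds at `z*` for the branch problem `NLP(β₁, β₂)`. -/
def CRSCpiece (zs : Euc n) (b1 b2 : Set (Fin m)) : Prop :=
  ∃ U ∈ 𝓝 zs, ∀ z ∈ U,
    Set.finrank ℝ ((fun i => P.g' i z) '' P.Iminus zs b1 b2 ∪ P.EqGrads zs b1 b2 z) =
      Set.finrank ℝ ((fun i => P.g' i zs) '' P.Iminus zs b1 b2 ∪ P.EqGrads zs b1 b2 zs)

/-- MPSC piecewise CRSC: CRSC holds for every branch problem `NLP(β₁, β₂)`. -/
def PiecewiseCRSC (zs : Euc n) : Prop :=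
  ∀ b1 b2 : Set (Fin m), b1 ∪ b2 = P.IGH zs → b1 ∩ b2 = ∅ → P.CRSCpiece zs b1 b2

/-- The set-valued map `K` (index sets frozen at `z*`, gradients at `z`). -/
def Kmap (zs z : Euc n) : Set (Euc n) :=
  {y | ∃ (lg : Fin p → ℝ) (lh : Fin q → ℝ) (lG lH : Fin m → ℝ),
      (∀ i, 0 ≤ lg i) ∧ (∀ i, i ∉ P.Ig zs → lg i = 0) ∧
      (∀ i ∈ P.IGs zs, lH i = 0) ∧ (∀ i ∈ P.IHs zs, lG i = 0) ∧
      (∀ i ∈ P.IGH zs, lG i * lH i = 0) ∧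
      y = (∑ i, lg i • P.g' i z) + (∑ j, lh j • P.h' j z)
          + (∑ i, (lG i • P.G' i z + lH i • P.H' i z))}

/-- `z*` is AM-regular. -/
def AMRegular (zs : Euc n) : Prop :=
  ∀ y : Euc n,
    (∃ zk yk : ℕ → Euc n, Tendsto zk atTop (𝓝 zs) ∧ Tendsto yk atTop (𝓝 y) ∧
      ∀ k, yk k ∈ P.Kmap zs (zk k)) → y ∈ P.Kmap zs zs

/-- The regular (Fréchet) normal cone to `A` at `x`. -/
def frechetNormalCone (A : Set (Euc n)) (x : Euc n) : Set (Euc n) :=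
  {ζ | ∀ ε > (0 : ℝ), ∃ δ > (0 : ℝ), ∀ y ∈ A, ‖y - x‖ < δ → ⟪ζ, y - x⟫_ℝ ≤ ε * ‖y - x‖}

/-- The generalized Guignard constraint qualification at `z*`. -/
def GGCQ (zs : Euc n) : Prop :=
  frechetNormalCone P.Feas zs = {ζ | ∀ d ∈ P.LinCone zs, ⟪ζ, d⟫_ℝ ≤ 0}

/-- Membership in the multiplier set `R_SC`. -/
def InRSC (zs : Euc n) (lg : Fin p → ℝ) (lh : Fin q → ℝ) (lG lH : Fin m → ℝ) : Prop :=
  (∀ i, i ∉ P.Ig zs → lg i = 0) ∧ (∀ i ∈ P.IHs zs, lG i = 0) ∧ ∀ i ∈ P.IGs zs, lH i = 0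

/-- Membership in the multiplier set `N_SC`. -/
def InNSC (zs : Euc n) (mg : Fin p → ℝ) (mh : Fin q → ℝ) (mG mH : Fin m → ℝ) : Prop :=
  P.InRSC zs mg mh mG mH ∧
  (0 : Euc n) = (∑ i, mg i • P.g' i zs) + (∑ j, mh j • P.h' j zs)
      + (∑ i, (mG i • P.G' i zs + mH i • P.H' i zs))

/-- `z*` is Q-stationary with respect to the bipartition `(β₁, β₂)` of `I_GH*`. -/
def QStat (zs : Euc n) (b1 b2 : Set (Fin m)) : Prop :=
  ∃ (lg mg : Fin p → ℝ) (lh mh : Fin q → ℝ) (lG lH mG mH : Fin m → ℝ),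
    P.InRSC zs lg lh lG lH ∧
    ((0 : Euc n) = P.f' zs + (∑ i, lg i • P.g' i zs) + (∑ j, lh j • P.h' j zs)
        + (∑ i, (lG i • P.G' i zs + lH i • P.H' i zs))) ∧
    P.InNSC zs mg mh mG mH ∧
    (∀ i ∈ P.Ig zs, max (mg i) 0 ≤ lg i) ∧
    (∀ i ∈ b1, lH i = 0 ∧ lG i = mG i) ∧
    ∀ i ∈ b2, lG i = 0 ∧ lH i = mH i

end MPSC

/-! The switching constraints are first frozen: near a feasible `zs`, imposing `Gᵢ = 0` when
`Gᵢ(zs) = 0` and `Hᵢ = 0` otherwise gives an ordinary nonlinear program whose feasible set lies in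
that of the MPSC, so `zs` minimizes it locally. Adding `‖z - zs‖ ^ 2` to the objective makes the
minimizer strict, which forces the quadratic penalty functions to have unconstrained local
minimizers arbitrarily close to `zs`; their stationarity says that `-∇f(z) - 2(z - zs)` lies in
`K(z)`. AM-regularity is what allows passing to the limit `z → zs`. -/

section QuadraticPenalty

variable {X ι κ : Type*}

/-- The feasible set of the nonlinear program with inequality constraints `gᵢ ≤ 0` and equality
constraints `hⱼ = 0`. -/
def nlpFeasible (g : ι → X → ℝ) (h : κ → X → ℝ) : Set X :=
  {x | (∀ i, g i x ≤ 0) ∧ ∀ j, h j x = 0}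

variable [Fintype ι] [Fintype κ]

/-- The quadratic penalty of the constraints `gᵢ ≤ 0`, `hⱼ = 0`. -/
def quadPenalty (g : ι → X → ℝ) (h : κ → X → ℝ) (x : X) : ℝ :=
  ∑ i, max (g i x) 0 ^ 2 + ∑ j, h j x ^ 2

lemma quadPenalty_nonneg (g : ι → X → ℝ) (h : κ → X → ℝ) (x : X) : 0 ≤ quadPenalty g h x := by
  unfold quadPenalty
  positivity

lemma quadPenalty_eq_zero_iff {g : ι → X → ℝ} {h : κ → X → ℝ} {x : X} :
    quadPenalty g h x = 0 ↔ x ∈ nlpFeasible g h := by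
  rw [quadPenalty, add_eq_zero_iff_of_nonneg (by positivity) (by positivity),
    Finset.sum_eq_zero_iff_of_nonneg fun _ _ ↦ sq_nonneg _,
    Finset.sum_eq_zero_iff_of_nonneg fun _ _ ↦ sq_nonneg _]
  simp [nlpFeasible]

lemma abs_max_zero_sq_sub_le {R : Type*} [CommRing R] [LinearOrder R] [IsStrictOrderedRing R]
    (s t : R) :
    |max s 0 ^ 2 - max t 0 ^ 2 - (s - t) * (2 * max t 0)| ≤ |s - t| ^ 2 := by
  rw [sq_abs, abs_le]
  rcases max_cases s 0 with ⟨hs, hs'⟩ | ⟨hs, hs'⟩ <;>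
    rcases max_cases t 0 with ⟨ht, ht'⟩ | ⟨ht, ht'⟩ <;>
    rw [hs, ht] <;> constructor <;> nlinarith

lemma hasDerivAt_max_zero_sq (t : ℝ) :
    HasDerivAt (fun s : ℝ ↦ max s 0 ^ 2) (2 * max t 0) t := by
  rw [hasDerivAt_iff_isLittleO]
  refine Asymptotics.IsBigO.trans_isLittleO (.of_bound 1 (.of_forall fun s ↦ ?_))
    (Asymptotics.isLittleO_pow_sub_sub t one_lt_two)
  simpa using abs_max_zero_sq_sub_le s t

lemma hasGradientAt_quadPenalty {E : Type*} [NormedAddCommGroup E] [InnerProductSpace ℝ E]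
    [CompleteSpace E] {g : ι → E → ℝ} {h : κ → E → ℝ} {g' : ι → E} {h' : κ → E} {x : E}
    (hg : ∀ i, HasGradientAt (g i) (g' i) x) (hh : ∀ j, HasGradientAt (h j) (h' j) x) :
    HasGradientAt (quadPenalty g h)
      (∑ i, (2 * max (g i x) 0) • g' i + ∑ j, (2 * h j x) • h' j) x := by
  simp only [hasGradientAt_iff_hasFDerivAt, map_add, map_sum, map_smul] at hg hh ⊢
  have hsq (t : ℝ) : HasDerivAt (fun s : ℝ ↦ s ^ 2) (2 * t) t := by simpa using hasDerivAt_pow 2 t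
  exact .add (.fun_sum fun i _ ↦ (hasDerivAt_max_zero_sq _).comp_hasFDerivAt x (hg i))
    (.fun_sum fun j _ ↦ (hsq _).comp_hasFDerivAt x (hh j))

end QuadraticPenalty

lemma exists_nat_forall_lt_add_mul {X : Type*} [TopologicalSpace X] {K : Set X} (hK : IsCompact K)
    {φ V : X → ℝ} (hφ : Continuous φ) (hV : Continuous V) (hV_nonneg : ∀ x, 0 ≤ V x) {c : ℝ}
    (hc : ∀ x ∈ K, V x = 0 → c < φ x) : ∃ k : ℕ, ∀ x ∈ K, c < φ x + k * V x := by
  refine hK.elim_directed_cover (fun k : ℕ ↦ {x | c < φ x + k * V x})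
    (fun k ↦ isOpen_lt continuous_const (by fun_prop)) (fun x hx ↦ Set.mem_iUnion.2 ?_)
    (Monotone.directed_le fun k l hkl x (hx : c < φ x + k * V x) ↦ hx.trans_le ?_)
  · rcases (hV_nonneg x).eq_or_lt with hVx | hVx
    · exact ⟨0, by simpa using hc x hx hVx.symm⟩
    · obtain ⟨k, hk⟩ := exists_nat_gt ((c - φ x) / V x)
      exact ⟨k, sub_lt_iff_lt_add'.1 ((div_lt_iff₀ hVx).1 hk)⟩
  · gcongr
    exact hV_nonneg x

lemma exists_isLocalMin_add_mul_mem_ball {X : Type*} [PseudoMetricSpace X] [ProperSpace X]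
    {φ V : X → ℝ} (hφ : Continuous φ) (hV : Continuous V) (hV_nonneg : ∀ x, 0 ≤ V x)
    {a : X} {r : ℝ} (hr : 0 ≤ r) (hVa : V a = 0)
    (hmin : ∀ x ∈ Metric.sphere a r, V x = 0 → φ a < φ x) :
    ∃ k : ℕ, ∃ x ∈ Metric.ball a r, IsLocalMin (fun y ↦ φ y + k * V y) x := by
  obtain ⟨k, hk⟩ := exists_nat_forall_lt_add_mul (isCompact_sphere a r) hφ hV hV_nonneg hmin
  refine ⟨k, Metric.exists_isLocalMin_mem_ball (by fun_prop) (Metric.mem_closedBall_self hr)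
    fun x hx ↦ ?_⟩
  simpa [hVa] using hk x hx

lemma frequently_exists_isLocalMin_add_quadPenalty {X ι κ : Type*} [PseudoMetricSpace X]
    [ProperSpace X] [Fintype ι] [Fintype κ] {f : X → ℝ} {g : ι → X → ℝ} {h : κ → X → ℝ} {a : X}
    (hf : Continuous f) (hV : Continuous (quadPenalty g h)) (ha : a ∈ nlpFeasible g h)
    (hmin : IsLocalMinOn f (nlpFeasible g h) a) :
    ∃ᶠ x in 𝓝 a, ∃ k : ℕ,
      IsLocalMin (fun y ↦ f y + dist y a ^ 2 + k * quadPenalty g h y) x := by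
  rw [frequently_iff]
  intro U hU
  obtain ⟨r, hr, hball⟩ := Metric.nhds_basis_closedBall.mem_iff.1
    (inter_mem hU (eventually_nhdsWithin_iff.1 hmin))
  have hstrict : ∀ x ∈ Metric.sphere a r, quadPenalty g h x = 0 →
      f a + dist a a ^ 2 < f x + dist x a ^ 2 := by
    intro x hx hVx
    have hfx : f a ≤ f x :=
      (hball (Metric.sphere_subset_closedBall hx)).2 (quadPenalty_eq_zero_iff.1 hVx)
    simpa [Metric.mem_sphere.1 hx] using add_lt_add_of_le_of_lt hfx (pow_pos hr 2)
  obtain ⟨k, x, hx, hloc⟩ := exists_isLocalMin_add_mul_mem_ball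
    (φ := fun y ↦ f y + dist y a ^ 2) (by fun_prop) hV (quadPenalty_nonneg g h) hr.le
    (quadPenalty_eq_zero_iff.2 ha) hstrict
  exact ⟨x, (hball (Metric.ball_subset_closedBall hx)).1, k, hloc⟩

lemma grad_add_two_smul_sub_add_smul_grad_eq_zero {E : Type*} [NormedAddCommGroup E]
    [InnerProductSpace ℝ E] [CompleteSpace E] {f V : E → ℝ} {f' V' a x : E} {k : ℝ}
    (hf : HasGradientAt f f' x) (hV : HasGradientAt V V' x)
    (hmin : IsLocalMin (fun y ↦ f y + dist y a ^ 2 + k * V y) x) :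
    f' + (2 : ℝ) • (x - a) + k • V' = 0 := by
  simp only [dist_eq_norm] at hmin
  have hderiv := (hf.hasFDerivAt.add ((hasFDerivAt_id x).sub_const a).norm_sq).add
    (hV.hasFDerivAt.const_mul k)
  refine (InnerProductSpace.toDual ℝ E).injective ?_
  rw [map_zero, ← hmin.hasFDerivAt_eq_zero hderiv]
  ext y
  simp

theorem frequently_approximate_kkt {E ι κ : Type*} [NormedAddCommGroup E] [InnerProductSpace ℝ E]
    [ProperSpace E] [Fintype ι] [Fintype κ] {f : E → ℝ} {f' : E → E} {g : ι → E → ℝ}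
    {g' : ι → E → E} {h : κ → E → ℝ} {h' : κ → E → E} {a : E}
    (hf : ∀ x, HasGradientAt f (f' x) x)
    (hg : ∀ i x, HasGradientAt (g i) (g' i x) x) (hh : ∀ j x, HasGradientAt (h j) (h' j x) x)
    (ha : a ∈ nlpFeasible g h) (hmin : IsLocalMinOn f (nlpFeasible g h) a) :
    ∃ᶠ x in 𝓝 a, ∃ (lg : ι → ℝ) (lh : κ → ℝ),
      (∀ i, 0 ≤ lg i) ∧ (∀ i, g i x ≤ 0 → lg i = 0) ∧
      f' x + (2 : ℝ) • (x - a) + (∑ i, lg i • g' i x + ∑ j, lh j • h' j x) = 0 := by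
  have hV (x : E) := hasGradientAt_quadPenalty (hg · x) (hh · x)
  refine (frequently_exists_isLocalMin_add_quadPenalty
    (continuous_iff_continuousAt.2 fun x ↦ (hf x).continuousAt)
    (continuous_iff_continuousAt.2 fun x ↦ (hV x).continuousAt) ha hmin).mono ?_
  rintro x ⟨k, hloc⟩
  refine ⟨fun i ↦ k * (2 * max (g i x) 0), fun j ↦ k * (2 * h j x), fun i ↦ by positivity,
    fun i hi ↦ by simp [hi], ?_⟩
  simpa only [smul_add, Finset.smul_sum, smul_smul] using
    grad_add_two_smul_sub_add_smul_grad_eq_zero (hf x) (hV x) hloc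

namespace MPSC

variable {n p q m : ℕ} (P : MPSC n p q m)

/-- The switching constraints frozen at `zs`: the branch `Gᵢ = 0` if `Gᵢ(zs) = 0`, and `Hᵢ = 0`
otherwise. Biactive indices are thus assigned to `G`. -/
def switchBranch (zs : Euc n) (i : Fin m) : Euc n → ℝ :=
  if P.G i zs = 0 then P.G i else P.H i

/-- The gradients of the frozen switching constraints `switchBranch`. -/
def switchBranchGrad (zs : Euc n) (i : Fin m) : Euc n → Euc n :=
  if P.G i zs = 0 then P.G' i else P.H' i

/-- Asymptotic M-stationarity: `εₖ - ∇f(zₖ) ∈ K(zₖ)` along some sequences `zₖ → zs`, `εₖ → 0`. -/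
def AMStationary (zs : Euc n) : Prop :=
  ∃ zk ek : ℕ → Euc n, Tendsto zk atTop (𝓝 zs) ∧ Tendsto ek atTop (𝓝 0) ∧
    ∀ k, ek k - P.f' (zk k) ∈ P.Kmap zs (zk k)

variable {P} {zs : Euc n}

lemma hasGradientAt_switchBranch (i : Fin m) (z : Euc n) :
    HasGradientAt (P.switchBranch zs i) (P.switchBranchGrad zs i z) z := by
  unfold switchBranch switchBranchGrad
  split_ifs
  exacts [P.grad_G i z, P.grad_H i z]

lemma mul_eq_zero_of_switchBranch_eq_zero {i : Fin m} {z : Euc n}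
    (hz : P.switchBranch zs i z = 0) : P.G i z * P.H i z = 0 := by
  unfold switchBranch at hz
  split_ifs at hz <;> simp [hz]

lemma nlpFeasible_switchBranch_subset_feas :
    nlpFeasible P.g (Sum.elim P.h (P.switchBranch zs)) ⊆ P.Feas :=
  fun _ ⟨hg, hh⟩ ↦ ⟨hg, fun j ↦ hh (.inl j), fun i ↦
    mul_eq_zero_of_switchBranch_eq_zero (hh (.inr i))⟩

lemma mem_nlpFeasible_switchBranch (hfeas : zs ∈ P.Feas) :
    zs ∈ nlpFeasible P.g (Sum.elim P.h (P.switchBranch zs)) := by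
  obtain ⟨hg, hh, hGH⟩ := hfeas
  refine ⟨hg, Sum.rec hh fun i ↦ ?_⟩
  by_cases hi : P.G i zs = 0
  · simp [switchBranch, hi]
  · simpa [switchBranch, hi] using hGH i

lemma eventually_g_nonpos_of_notMem_ig (hfeas : zs ∈ P.Feas) :
    ∀ᶠ z in 𝓝 zs, ∀ i ∉ P.Ig zs, P.g i z ≤ 0 := by
  refine eventually_all.2 fun i ↦ eventually_imp_distrib_left.2 fun hi ↦ ?_
  have hlt : P.g i zs < 0 := lt_of_le_of_ne (hfeas.1 i) hi
  exact ((P.grad_g i zs).continuousAt.eventually_lt_const hlt).mono fun _ ↦ le_of_lt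

lemma sum_add_sum_switchBranchGrad_mem_kmap {z : Euc n} {lg : Fin p → ℝ} (lh : Fin q ⊕ Fin m → ℝ)
    (hlg : ∀ i, 0 ≤ lg i) (hlg' : ∀ i ∉ P.Ig zs, lg i = 0) :
    ∑ i, lg i • P.g' i z + ∑ j, lh j • Sum.elim P.h' (P.switchBranchGrad zs) j z ∈
      P.Kmap zs z := by
  refine ⟨lg, lh ∘ .inl, fun i ↦ if P.G i zs = 0 then lh (.inr i) else 0,
    fun i ↦ if P.G i zs = 0 then 0 else lh (.inr i), hlg, hlg', fun i hi ↦ if_pos hi.1,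
    fun i hi ↦ if_neg hi.1, fun i hi ↦ by simp [hi.1], ?_⟩
  have hbranch (i : Fin m) : lh (.inr i) • P.switchBranchGrad zs i z =
      (if P.G i zs = 0 then lh (.inr i) else 0) • P.G' i z +
        (if P.G i zs = 0 then 0 else lh (.inr i)) • P.H' i z := by
    unfold switchBranchGrad
    split_ifs <;> simp
  simp [hbranch, add_assoc]

lemma frequently_neg_grad_mem_kmap (hfeas : zs ∈ P.Feas) (hmin : IsLocalMinOn P.f P.Feas zs) :
    ∃ᶠ z in 𝓝 zs, -((2 : ℝ) • (z - zs)) - P.f' z ∈ P.Kmap zs z := by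
  have hkkt := frequently_approximate_kkt (h' := Sum.elim P.h' (P.switchBranchGrad zs)) P.grad_f
    P.grad_g (Sum.rec P.grad_h hasGradientAt_switchBranch) (mem_nlpFeasible_switchBranch hfeas)
    (hmin.on_subset nlpFeasible_switchBranch_subset_feas)
  refine (hkkt.and_eventually (eventually_g_nonpos_of_notMem_ig hfeas)).mono ?_
  rintro z ⟨⟨lg, lh, hlg, hcompl, hstat⟩, hinactive⟩
  rw [← neg_add', add_comm, neg_eq_of_add_eq_zero_right hstat]
  exact sum_add_sum_switchBranchGrad_mem_kmap lh hlg fun i hi ↦ hcompl i (hinactive i hi)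

theorem amStationary_of_isLocalMinOn (hfeas : zs ∈ P.Feas) (hmin : IsLocalMinOn P.f P.Feas zs) :
    P.AMStationary zs := by
  obtain ⟨zk, hzk, hK⟩ := exists_seq_forall_of_frequently (frequently_neg_grad_mem_kmap hfeas hmin)
  refine ⟨zk, _, hzk, ?_, hK⟩
  simpa using ((hzk.sub_const zs).const_smul (2 : ℝ)).neg

lemma AMStationary.neg_grad_mem_kmap (hstat : P.AMStationary zs) (hreg : P.AMRegular zs) :
    -P.f' zs ∈ P.Kmap zs zs := by
  obtain ⟨zk, ek, hzk, hek, hK⟩ := hstat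
  refine hreg _ ⟨zk, _, hzk, ?_, hK⟩
  simpa using hek.sub ((P.cont_f'.tendsto zs).comp hzk)

lemma exists_isMMult_of_neg_grad_mem_kmap (hK : -P.f' zs ∈ P.Kmap zs zs) :
    ∃ (lg : Fin p → ℝ) (lh : Fin q → ℝ) (lG lH : Fin m → ℝ), P.IsMMult zs lg lh lG lH := by
  obtain ⟨lg, lh, lG, lH, hlg, hlg', hlH, hlG, hGH, hsum⟩ := hK
  refine ⟨lg, lh, lG, lH, ?_, fun i _ ↦ hlg i, hlG, hlH, hGH⟩
  have hactive : ∑ i with i ∈ P.Ig zs, lg i • P.g' i zs = ∑ i, lg i • P.g' i zs :=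
    Finset.sum_filter_of_ne fun i _ hi ↦ of_not_not fun hi' ↦ hi (by rw [hlg' i hi', zero_smul])
  rw [hactive, add_assoc, add_assoc, ← add_assoc (∑ i, lg i • P.g' i zs), ← hsum, add_neg_cancel]

end MPSC

/-- a local minimizer of the MPSC which is AM-regular is M-stationary. -/
theorem mpsc_AMregular_M_stationary {n p q m : ℕ} (P : MPSC n p q m) (zs : Euc n)
    (hfeas : zs ∈ P.Feas) (hmin : IsLocalMinOn P.f P.Feas zs)
    (hreg : P.AMRegular zs) :
    ∃ (lg : Fin p → ℝ) (lh : Fin q → ℝ) (lG lH : Fin m → ℝ),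
      P.IsMMult zs lg lh lG lH := by
  have hstat : P.AMStationary zs := MPSC.amStationary_of_isLocalMinOn hfeas hmin
  exact MPSC.exists_isMMult_of_neg_grad_mem_kmap (hstat.neg_grad_mem_kmap hreg)
end
end

section
/- Let z* be a local minimizer of the MPSC and let d ∈ C(z*) be a critical direction. If MPSC-LICQ(d) holds at z*, then z* is S-stationary in direction d. -/
open scoped Classical InnerProductSpace
open Filter Topology

noncomputable section

/-!
Let `A` collect the gradients of the constraints active in direction `d`, and let `K` be the cone
of constraint values compatible with the linearization in direction `d`. By MPSC-LICQ(`d`) the map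
`A` is surjective, so if `A v ∈ K`, then for small `s > 0` the implicit function theorem gives a
feasible arc through `z*` with velocity `d + s v`. Minimality yields `0 ≤ ∇f(z*)·(d + s v)`, and
`∇f(z*)·d ≤ 0` then forces `0 ≤ ∇f(z*)·v`. So `-∇f(z*)` is polar to `A⁻¹ K`, hence of the form
`Aᵀ λ` with `λ` in the polar of `K`. For `i ∈ I_GH*(d)` the cone `K` contains both lines spanned
by the coordinate vectors of `G_i` and `H_i`, whence `λ_i^G = λ_i^H = 0`.
-/

theorem exists_curve_of_hasStrictFDerivAt {𝕜 E F : Type*} [NontriviallyNormedField 𝕜]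
    [NormedAddCommGroup E] [NormedSpace 𝕜 E] [CompleteSpace E]
    [NormedAddCommGroup F] [NormedSpace 𝕜 F] [CompleteSpace F]
    {f : E → F} {f' : E →L[𝕜] F} {x : E} (hf : HasStrictFDerivAt f f' x)
    (hrange : f'.range = ⊤) (hker : f'.ker.ClosedComplemented) (u : E) :
    ∃ c : 𝕜 → E, c 0 = x ∧ HasDerivAt c u 0 ∧ ∀ᶠ t in 𝓝 0, f (c t) = f x + t • f' u := by
  -- Straighten `f` by `z ↦ (f z, π (z - x))`, with `π` a projection onto `ker f'`, and pull back
  -- the line through the image of `x` in the direction of the image of `u`.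
  let φ := hf.implicitFunctionDataOfComplemented f f' hrange hker
  let ψ := φ.hasStrictFDerivAt.localInverse φ.prodFun _ x
  let ℓ : 𝕜 → F × f'.ker := fun t ↦ φ.prodFun x + t • (f' u, φ.rightDeriv u)
  have hℓ0 : ℓ 0 = φ.prodFun x := by simp only [ℓ, zero_smul, add_zero]
  have hℓ : HasDerivAt ℓ (f' u, φ.rightDeriv u) 0 :=
    (((hasDerivAt_id (0 : 𝕜)).smul_const _).const_add _).congr_deriv (one_smul 𝕜 _)
  refine ⟨ψ ∘ ℓ, ?_, ?_, ?_⟩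
  · rw [Function.comp_apply, hℓ0]
    exact φ.hasStrictFDerivAt.localInverse_apply_image
  · have hψ := φ.hasStrictFDerivAt.to_localInverse.hasFDerivAt.comp_hasDerivAt_of_eq 0 hℓ hℓ0.symm
    exact hψ.congr_deriv (ContinuousLinearEquiv.symm_apply_apply _ u)
  · have hlim : Tendsto ℓ (𝓝 0) (𝓝 (φ.prodFun x)) := hℓ0 ▸ hℓ.continuousAt.tendsto
    filter_upwards [hlim.eventually φ.hasStrictFDerivAt.eventually_right_inverse] with t ht
    exact congrArg Prod.fst ht

theorem mem_posTangentConeAt_of_hasDerivAt {E : Type*} [NormedAddCommGroup E] [NormedSpace ℝ E]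
    {s : Set E} {c : ℝ → E} {u : E} (hc : HasDerivAt c u 0) (hs : ∀ᶠ t in 𝓝[>] 0, c t ∈ s) :
    u ∈ posTangentConeAt s (c 0) := by
  have hscaled : Tendsto (fun t : ℝ ↦ t⁻¹.toNNReal • (c t - c 0)) (𝓝[>] 0) (𝓝 u) := by
    refine hc.tendsto_slope_zero_right.congr' ?_
    filter_upwards [self_mem_nhdsWithin] with t ht
    rw [NNReal.smul_def, Real.coe_toNNReal _ (inv_nonneg.2 (le_of_lt ht)), zero_add]
  have hlim : Tendsto (fun t ↦ c t - c 0) (𝓝[>] 0) (𝓝 0) := by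
    simpa only [sub_self] using
      (hc.continuousAt.tendsto.mono_left nhdsWithin_le_nhds).sub_const (c 0)
  exact mem_tangentConeAt_of_seq (𝓝[>] 0) _ _ hlim
    (hs.mono fun t ht ↦ by rwa [add_sub_cancel]) hscaled

theorem eventually_neg_nhdsGT_of_hasDerivAt {φ : ℝ → ℝ} {φ' a : ℝ} (hφ : HasDerivAt φ φ' a)
    (ha : φ a ≤ 0) (hφ' : φ a = 0 → φ' < 0) : ∀ᶠ t in 𝓝[>] a, φ t < 0 := by
  rcases ha.lt_or_eq with hneg | hzero
  · exact (hφ.continuousAt.eventually_lt_const hneg).filter_mono nhdsWithin_le_nhds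
  · filter_upwards [hφ.hasDerivWithinAt.limsup_slope_le' (lt_irrefl a) (hφ' hzero),
      self_mem_nhdsWithin] with t hslope hat
    exact hzero ▸ (slope_neg_iff_of_le (le_of_lt hat)).1 hslope

section LinearIndepOn

variable {ι E : Type*} [NormedAddCommGroup E] [InnerProductSpace ℝ E] {b : ι → E} {S : Set ι}

theorem exists_inner_eqOn_of_linearIndepOn [Finite S] (hb : LinearIndepOn ℝ b S) (y : ι → ℝ) :
    ∃ v, S.EqOn (fun i ↦ ⟪b i, v⟫_ℝ) y := by
  let B := Module.Basis.span hb
  have : FiniteDimensional ℝ (Submodule.span ℝ (Set.range fun i : S ↦ b i)) := .of_basis B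
  let φ := LinearMap.toContinuousLinearMap (B.constr ℝ fun i : S ↦ y i)
  let v := (InnerProductSpace.toDual ℝ _).symm φ
  refine ⟨v, fun i hi ↦ ?_⟩
  have hB : (B ⟨i, hi⟩ : E) = b i := congrArg Subtype.val (Module.Basis.span_apply hb ⟨i, hi⟩)
  calc ⟪b i, v⟫_ℝ = ⟪v, B ⟨i, hi⟩⟫_ℝ := by rw [real_inner_comm, Submodule.coe_inner, hB]
    _ = φ (B ⟨i, hi⟩) := InnerProductSpace.toDual_symm_apply
    _ = y i := B.constr_basis ℝ _ _

theorem mem_span_image_of_inner_nonpos [Finite S] {x : E}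
    (hx : ∀ v, (∀ i ∈ S, ⟪b i, v⟫_ℝ = 0) → ⟪x, v⟫_ℝ ≤ 0) : x ∈ Submodule.span ℝ (b '' S) := by
  have : FiniteDimensional ℝ (Submodule.span ℝ (b '' S)) :=
    FiniteDimensional.span_of_finite ℝ (S.toFinite.image b)
  rw [← Submodule.orthogonal_orthogonal (Submodule.span ℝ (b '' S)), Submodule.mem_orthogonal']
  intro v hv
  have hv0 (i) (hi : i ∈ S) : ⟪b i, v⟫_ℝ = 0 := hv _ (Submodule.subset_span ⟨i, hi, rfl⟩)
  refine le_antisymm (hx v hv0) ?_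
  simpa only [inner_neg_right, Left.neg_nonpos_iff] using
    hx (-v) fun i hi ↦ by rw [inner_neg_right, hv0 i hi, neg_zero]

-- `(A⁻¹ K)° = Aᵀ K°` for the surjective map `A v = (⟪b i, v⟫)_{i ∈ S}`.
theorem exists_multipliers_of_linearIndepOn [Fintype ι] (hb : LinearIndepOn ℝ b S)
    {K : Set (ι → ℝ)} (hK : 0 ∈ K) {x : E}
    (hx : ∀ v, ∀ y ∈ K, S.EqOn (fun i ↦ ⟪b i, v⟫_ℝ) y → ⟪x, v⟫_ℝ ≤ 0) :
    ∃ c : ι → ℝ, (∀ i ∉ S, c i = 0) ∧ ∑ i, c i • b i = x ∧ ∀ y ∈ K, c ⬝ᵥ y ≤ 0 := by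
  have hspan : x ∈ Submodule.span ℝ (b '' S) :=
    mem_span_image_of_inner_nonpos fun v hv ↦ hx v 0 hK hv
  obtain ⟨c, hcS, hcx⟩ := (Finsupp.mem_span_image_iff_linearCombination ℝ).1 hspan
  have hc0 (i) (hi : i ∉ S) : c i = 0 := Finsupp.notMem_support_iff.1 fun h ↦ hi (hcS h)
  have hsum : ∑ i, c i • b i = x := by
    rw [← hcx, Finsupp.linearCombination_apply]
    exact (c.sum_fintype (fun i a ↦ a • b i) fun i ↦ zero_smul ℝ (b i)).symm
  refine ⟨c, hc0, hsum, fun y hy ↦ ?_⟩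
  obtain ⟨v, hv⟩ := exists_inner_eqOn_of_linearIndepOn hb y
  calc c ⬝ᵥ y = ∑ i, c i * ⟪b i, v⟫_ℝ := by
        refine Finset.sum_congr rfl fun i _ ↦ ?_
        by_cases hi : i ∈ S
        · rw [← hv hi]
        · rw [hc0 i hi, zero_mul, zero_mul]
    _ = ⟪x, v⟫_ℝ := by simp only [← hsum, sum_inner, real_inner_smul_left]
    _ ≤ 0 := hx v y hy hv

theorem exists_curve_of_linearIndepOn [CompleteSpace E] [Finite S] (hb : LinearIndepOn ℝ b S)
    {F : ι → E → ℝ} {x : E} (hF : ∀ i ∈ S, HasStrictFDerivAt (F i) (innerSL ℝ (b i)) x) (u : E) :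
    ∃ c : ℝ → E, c 0 = x ∧ HasDerivAt c u 0 ∧
      ∀ᶠ t in 𝓝 0, ∀ i ∈ S, F i (c t) = F i x + t * ⟪b i, u⟫_ℝ := by
  let A : E →L[ℝ] (S → ℝ) := .pi fun i ↦ innerSL ℝ (b i)
  have := Fintype.ofFinite S
  have hA : HasStrictFDerivAt (fun z (i : S) ↦ F i z) A x :=
    hasStrictFDerivAt_pi.2 fun i ↦ hF i i.2
  have hrange : A.range = ⊤ := LinearMap.range_eq_top.2 fun y ↦ by
    obtain ⟨v, hv⟩ := exists_inner_eqOn_of_linearIndepOn hb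
      (Function.extend Subtype.val y 0)
    exact ⟨v, funext fun i ↦ (hv i.2).trans (Subtype.val_injective.extend_apply y 0 i)⟩
  obtain ⟨c, hc0, hcu, hc⟩ := exists_curve_of_hasStrictFDerivAt hA hrange
    A.ker_closedComplemented_of_finiteDimensional_range u
  exact ⟨c, hc0, hcu, hc.mono fun t ht i hi ↦ congrFun ht ⟨i, hi⟩⟩

end LinearIndepOn

namespace MPSC

variable {n p q m : ℕ} (P : MPSC n p q m) {zs d : Euc n}

/-- Index set of all the constraint functions: the summands index, in this order, `g`, `h`, `G`
and `H`. -/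
abbrev Index (p q m : ℕ) : Type := Fin p ⊕ Fin q ⊕ Fin m ⊕ Fin m

/-- The constraint functions `g`, `h`, `G`, `H` as a single family. -/
def constr : Index p q m → Euc n → ℝ
  | .inl i => P.g i
  | .inr (.inl j) => P.h j
  | .inr (.inr (.inl i)) => P.G i
  | .inr (.inr (.inr i)) => P.H i

/-- The gradients of the family `MPSC.constr`. -/
def constrGrad : Index p q m → Euc n → Euc n
  | .inl i => P.g' i
  | .inr (.inl j) => P.h' j
  | .inr (.inr (.inl i)) => P.G' i
  | .inr (.inr (.inr i)) => P.H' i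

/-- The constraints whose gradients enter MPSC-LICQ in direction `d`. -/
def dirActive (zs d : Euc n) : Set (Index p q m) :=
  {k | match k with
    | .inl i => i ∈ P.Igd zs d
    | .inr (.inl _) => True
    | .inr (.inr (.inl i)) => i ∈ P.IGs zs ∪ P.IGd zs d ∪ P.IGHd zs d
    | .inr (.inr (.inr i)) => i ∈ P.IHs zs ∪ P.IHd zs d ∪ P.IGHd zs d}

/-- The cone of constraint values allowed by the linearization of the MPSC in direction `d`: its
preimage under the constraint gradients is the tangent cone to `L(z*)` at `d ∈ L(z*)`. -/
def dirLinCone (zs d : Euc n) : Set (Index p q m → ℝ) :=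
  {y | (∀ i ∈ P.Igd zs d, y (.inl i) ≤ 0) ∧ (∀ j, y (.inr (.inl j)) = 0) ∧
    (∀ i ∈ P.IGs zs ∪ P.IGd zs d, y (.inr (.inr (.inl i))) = 0) ∧
    (∀ i ∈ P.IHs zs ∪ P.IHd zs d, y (.inr (.inr (.inr i))) = 0) ∧
    ∀ i ∈ P.IGHd zs d, y (.inr (.inr (.inl i))) * y (.inr (.inr (.inr i))) = 0}

theorem hasGradientAt_constr (k : Index p q m) (z : Euc n) :
    HasGradientAt (P.constr k) (P.constrGrad k z) z :=
  match k with
  | .inl i => P.grad_g i z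
  | .inr (.inl j) => P.grad_h j z
  | .inr (.inr (.inl i)) => P.grad_G i z
  | .inr (.inr (.inr i)) => P.grad_H i z

theorem continuous_constrGrad (k : Index p q m) : Continuous (P.constrGrad k) :=
  match k with
  | .inl i => P.cont_g' i
  | .inr (.inl j) => P.cont_h' j
  | .inr (.inr (.inl i)) => P.cont_G' i
  | .inr (.inr (.inr i)) => P.cont_H' i

theorem hasStrictFDerivAt_constr (k : Index p q m) (z : Euc n) :
    HasStrictFDerivAt (P.constr k) (innerSL ℝ (P.constrGrad k z)) z :=
  hasStrictFDerivAt_of_hasFDerivAt_of_continuousAt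
    (.of_forall fun w ↦ (P.hasGradientAt_constr k w).hasFDerivAt)
    ((innerSL ℝ).continuous.comp (P.continuous_constrGrad k)).continuousAt

variable {P}

theorem linearIndepOn_constrGrad (hlicq : P.LICQd zs d) :
    LinearIndepOn ℝ (fun k ↦ P.constrGrad k zs) (P.dirActive zs d) := by
  let e := Sum.map (Subtype.val (p := (· ∈ P.Igd zs d))) (Sum.map (id : Fin q → Fin q)
    (Sum.map (Subtype.val (p := (· ∈ P.IGs zs ∪ P.IGd zs d ∪ P.IGHd zs d)))
      (Subtype.val (p := (· ∈ P.IHs zs ∪ P.IHd zs d ∪ P.IGHd zs d)))))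
  have he : Function.Injective e :=
    Subtype.val_injective.sumMap <| Function.injective_id.sumMap <|
      Subtype.val_injective.sumMap Subtype.val_injective
  have hrange : Set.range e = P.dirActive zs d := by
    ext (i | j | i | i) <;> simp [e, dirActive]
  rw [← hrange, linearIndepOn_range_iff he]
  unfold LICQd at hlicq
  convert hlicq using 1
  ext1 (i | j | i | i) <;> rfl

theorem mem_IG_or_mem_IH_or_mem_IGHd (hfeas : zs ∈ P.Feas) (hd : d ∈ P.LinCone zs) (i : Fin m) :
    i ∈ P.IGs zs ∪ P.IGd zs d ∨ i ∈ P.IHs zs ∪ P.IHd zs d ∨ i ∈ P.IGHd zs d := by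
  have hswitch := mul_eq_zero.1 (hfeas.2.2 i)
  have hdswitch (hi : i ∈ P.IGH zs) := mul_eq_zero.1 (hd.2.2.2.2 i hi)
  simp only [IGs, IHs, IGd, IHd, IGHd, IGH, Set.mem_union, Set.mem_ofPred_eq] at hdswitch ⊢
  tauto

theorem disjoint_IGs_union_IGd :
    Disjoint (P.IGs zs ∪ P.IGd zs d) (P.IHs zs ∪ P.IHd zs d ∪ P.IGHd zs d) := by
  rw [Set.disjoint_left]
  simp only [IGs, IHs, IGd, IHd, IGHd, IGH, Set.mem_union, Set.mem_ofPred_eq]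
  tauto

theorem disjoint_IHs_union_IHd :
    Disjoint (P.IHs zs ∪ P.IHd zs d) (P.IGs zs ∪ P.IGd zs d ∪ P.IGHd zs d) := by
  rw [Set.disjoint_left]
  simp only [IGs, IHs, IGd, IHd, IGHd, IGH, Set.mem_union, Set.mem_ofPred_eq]
  tauto

theorem constr_eq_zero (hfeas : zs ∈ P.Feas) {k : Index p q m} (hk : k ∈ P.dirActive zs d) :
    P.constr k zs = 0 :=
  match k, hk with
  | .inl _, hi => hi.1
  | .inr (.inl j), _ => hfeas.2.1 j
  | .inr (.inr (.inl _)), .inl (.inl hi) => hi.1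
  | .inr (.inr (.inl _)), .inl (.inr hi) => hi.1.1
  | .inr (.inr (.inl _)), .inr hi => hi.1.1
  | .inr (.inr (.inr _)), .inl (.inl hi) => hi.2
  | .inr (.inr (.inr _)), .inl (.inr hi) => hi.1.2
  | .inr (.inr (.inr _)), .inr hi => hi.1.2

theorem inner_constrGrad_eq_zero (hd : d ∈ P.LinCone zs) {k : Index p q m}
    (hk : k ∈ P.dirActive zs d) : ⟪P.constrGrad k zs, d⟫_ℝ = 0 :=
  match k, hk with
  | .inl _, hi => hi.2
  | .inr (.inl j), _ => hd.2.1 j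
  | .inr (.inr (.inl i)), .inl (.inl hi) => hd.2.2.1 i hi
  | .inr (.inr (.inl _)), .inl (.inr hi) => hi.2.1
  | .inr (.inr (.inl _)), .inr hi => hi.2.1
  | .inr (.inr (.inr i)), .inl (.inl hi) => hd.2.2.2.1 i hi
  | .inr (.inr (.inr _)), .inl (.inr hi) => hi.2.2
  | .inr (.inr (.inr _)), .inr hi => hi.2.2

theorem smul_mem_dirLinCone {y : Index p q m → ℝ} (hy : y ∈ P.dirLinCone zs d) {t : ℝ}
    (ht : 0 ≤ t) : t • y ∈ P.dirLinCone zs d := by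
  obtain ⟨hg, hh, hG, hH, hGH⟩ := hy
  refine ⟨fun i hi ↦ mul_nonpos_of_nonneg_of_nonpos ht (hg i hi), fun j ↦ ?_, fun i hi ↦ ?_,
    fun i hi ↦ ?_, fun i hi ↦ ?_⟩
  · rw [Pi.smul_apply, hh j, smul_zero]
  · rw [Pi.smul_apply, hG i hi, smul_zero]
  · rw [Pi.smul_apply, hH i hi, smul_zero]
  · rw [Pi.smul_apply, Pi.smul_apply, smul_mul_smul_comm, hGH i hi, smul_zero]

theorem zero_mem_dirLinCone : 0 ∈ P.dirLinCone zs d := by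
  simp [dirLinCone]

theorem single_inl_mem_dirLinCone (i : Fin p) {r : ℝ} (hr : r ≤ 0) :
    Pi.single (.inl i) r ∈ P.dirLinCone zs d := by
  exact ⟨fun i' _ ↦ Pi.single_nonpos.2 hr _, by simp⟩

theorem single_G_mem_dirLinCone {i : Fin m} (hi : i ∈ P.IGHd zs d) (r : ℝ) :
    Pi.single (.inr (.inr (.inl i))) r ∈ P.dirLinCone zs d := by
  refine ⟨by simp, by simp, fun i' hi' ↦ Pi.single_eq_of_ne (M := fun _ ↦ ℝ) ?_ r, by simp, by simp⟩
  rintro ⟨⟩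
  exact disjoint_IGs_union_IGd.notMem_of_mem_left hi' (.inr hi)

theorem single_H_mem_dirLinCone {i : Fin m} (hi : i ∈ P.IGHd zs d) (r : ℝ) :
    Pi.single (.inr (.inr (.inr i))) r ∈ P.dirLinCone zs d := by
  refine ⟨by simp, by simp, by simp, fun i' hi' ↦ Pi.single_eq_of_ne (M := fun _ ↦ ℝ) ?_ r, by simp⟩
  rintro ⟨⟩
  exact disjoint_IHs_union_IHd.notMem_of_mem_left hi' (.inr hi)

theorem mem_feas_of_eqOn (hfeas : zs ∈ P.Feas) (hd : d ∈ P.LinCone zs) {y : Index p q m → ℝ}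
    (hy : y ∈ P.dirLinCone zs d) {z : Euc n}
    (hz : (P.dirActive zs d).EqOn (fun k ↦ P.constr k z) y)
    (hg : ∀ i ∉ P.Igd zs d, P.g i z ≤ 0) : z ∈ P.Feas := by
  obtain ⟨hyg, hyh, hyG, hyH, hyGH⟩ := hy
  refine ⟨fun i ↦ ?_, fun j ↦ (hz (x := .inr (.inl j)) trivial).trans (hyh j), fun i ↦ ?_⟩
  · by_cases hi : i ∈ P.Igd zs d
    · exact (hz (x := .inl i) hi).trans_le (hyg i hi)
    · exact hg i hi
  · have hzG (hi : i ∈ P.IGs zs ∪ P.IGd zs d ∪ P.IGHd zs d) : P.G i z = y (.inr (.inr (.inl i))) :=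
      hz (x := .inr (.inr (.inl i))) hi
    have hzH (hi : i ∈ P.IHs zs ∪ P.IHd zs d ∪ P.IGHd zs d) : P.H i z = y (.inr (.inr (.inr i))) :=
      hz (x := .inr (.inr (.inr i))) hi
    rcases mem_IG_or_mem_IH_or_mem_IGHd hfeas hd i with hi | hi | hi
    · rw [hzG (.inl hi), hyG i hi, zero_mul]
    · rw [hzH (.inl hi), hyH i hi, mul_zero]
    · rw [hzG (.inr hi), hzH (.inr hi), hyGH i hi]

theorem mem_posTangentConeAt_feas (hfeas : zs ∈ P.Feas) (hd : d ∈ P.LinCone zs)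
    (hlicq : P.LICQd zs d) {y : Index p q m → ℝ} (hy : y ∈ P.dirLinCone zs d) {u : Euc n}
    (hu : (P.dirActive zs d).EqOn (fun k ↦ ⟪P.constrGrad k zs, u⟫_ℝ) y)
    (hg : ∀ i ∈ P.Ig zs \ P.Igd zs d, ⟪P.g' i zs, u⟫_ℝ < 0) :
    u ∈ posTangentConeAt P.Feas zs := by
  obtain ⟨c, rfl, hcu, hc⟩ := exists_curve_of_linearIndepOn (linearIndepOn_constrGrad hlicq)
    (fun k _ ↦ P.hasStrictFDerivAt_constr k zs) u
  have hgc (i) (hi : i ∉ P.Igd (c 0) d) : ∀ᶠ t in 𝓝[>] 0, P.g i (c t) < 0 :=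
    eventually_neg_nhdsGT_of_hasDerivAt ((P.grad_g i _).hasFDerivAt.comp_hasDerivAt 0 hcu)
      (hfeas.1 i) fun hi0 ↦ hg i ⟨hi0, hi⟩
  refine mem_posTangentConeAt_of_hasDerivAt hcu ?_
  filter_upwards [hc.filter_mono nhdsWithin_le_nhds, eventually_all.2 fun i ↦
    eventually_imp_distrib_left.2 (hgc i), self_mem_nhdsWithin] with t hct hgt ht
  refine mem_feas_of_eqOn hfeas hd (smul_mem_dirLinCone hy (le_of_lt ht)) (fun k hk ↦ ?_)
    fun i hi ↦ (hgt i hi).le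
  have huk : ⟪P.constrGrad k (c 0), u⟫_ℝ = y k := hu hk
  calc P.constr k (c t) = P.constr k (c 0) + t * ⟪P.constrGrad k (c 0), u⟫_ℝ := hct k hk
    _ = (t • y) k := by rw [constr_eq_zero hfeas hk, huk, zero_add, Pi.smul_apply, smul_eq_mul]

theorem eventually_add_smul_mem_posTangentConeAt_feas (hfeas : zs ∈ P.Feas)
    (hd : d ∈ P.LinCone zs) (hlicq : P.LICQd zs d) {y : Index p q m → ℝ}
    (hy : y ∈ P.dirLinCone zs d) {v : Euc n}
    (hv : (P.dirActive zs d).EqOn (fun k ↦ ⟪P.constrGrad k zs, v⟫_ℝ) y) :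
    ∀ᶠ s : ℝ in 𝓝[>] 0, d + s • v ∈ posTangentConeAt P.Feas zs := by
  have hg (i) (hi : i ∈ P.Ig zs \ P.Igd zs d) : ∀ᶠ s : ℝ in 𝓝 0, ⟪P.g' i zs, d + s • v⟫_ℝ < 0 := by
    have hid : ⟪P.g' i zs, d⟫_ℝ < 0 := (hd.1 i hi.1).lt_of_ne fun h ↦ hi.2 ⟨hi.1, h⟩
    have hcont : ContinuousAt (fun s : ℝ ↦ ⟪P.g' i zs, d + s • v⟫_ℝ) 0 := by fun_prop
    exact hcont.eventually_lt_const (by simpa only [zero_smul, add_zero])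
  filter_upwards [(eventually_all.2 fun i ↦ eventually_imp_distrib_left.2 (hg i)).filter_mono
    nhdsWithin_le_nhds, self_mem_nhdsWithin] with s hgs hs
  refine mem_posTangentConeAt_feas hfeas hd hlicq (smul_mem_dirLinCone hy (le_of_lt hs))
    (fun k hk ↦ ?_) hgs
  have hvk : ⟪P.constrGrad k zs, v⟫_ℝ = y k := hv hk
  calc ⟪P.constrGrad k zs, d + s • v⟫_ℝ
      = ⟪P.constrGrad k zs, d⟫_ℝ + s * ⟪P.constrGrad k zs, v⟫_ℝ := by
        rw [inner_add_right, real_inner_smul_right]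
    _ = (s • y) k := by
        rw [inner_constrGrad_eq_zero hd hk, hvk, zero_add, Pi.smul_apply, smul_eq_mul]

theorem inner_gradient_nonneg (hfeas : zs ∈ P.Feas) (hmin : IsLocalMinOn P.f P.Feas zs)
    (hd : d ∈ P.Crit zs) (hlicq : P.LICQd zs d) {y : Index p q m → ℝ}
    (hy : y ∈ P.dirLinCone zs d) {v : Euc n}
    (hv : (P.dirActive zs d).EqOn (fun k ↦ ⟪P.constrGrad k zs, v⟫_ℝ) y) :
    0 ≤ ⟪P.f' zs, v⟫_ℝ := by
  obtain ⟨s, hs, hs0⟩ := ((eventually_add_smul_mem_posTangentConeAt_feas hfeas hd.1 hlicq hy hv).and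
    self_mem_nhdsWithin).exists
  have hnonneg : 0 ≤ ⟪P.f' zs, d + s • v⟫_ℝ :=
    hmin.hasFDerivWithinAt_nonneg (P.grad_f zs).hasFDerivAt.hasFDerivWithinAt hs
  rw [inner_add_right, real_inner_smul_right] at hnonneg
  exact nonneg_of_mul_nonneg_right (by linarith [hd.2]) hs0

theorem exists_multipliers_of_isLocalMinOn (hfeas : zs ∈ P.Feas) (hmin : IsLocalMinOn P.f P.Feas zs)
    (hd : d ∈ P.Crit zs) (hlicq : P.LICQd zs d) :
    ∃ c : Index p q m → ℝ, (∀ k ∉ P.dirActive zs d, c k = 0) ∧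
      ∑ k, c k • P.constrGrad k zs = -P.f' zs ∧ ∀ y ∈ P.dirLinCone zs d, c ⬝ᵥ y ≤ 0 :=
  exists_multipliers_of_linearIndepOn (linearIndepOn_constrGrad hlicq) zero_mem_dirLinCone
    fun v y hy hv ↦ by
      rw [inner_neg_left, neg_nonpos]
      exact inner_gradient_nonneg hfeas hmin hd hlicq hy hv

theorem nonneg_of_mem_polar {c : Index p q m → ℝ} (hc : ∀ y ∈ P.dirLinCone zs d, c ⬝ᵥ y ≤ 0)
    (i : Fin p) : 0 ≤ c (.inl i) := by
  have hle := hc _ (single_inl_mem_dirLinCone i (neg_nonpos.2 zero_le_one))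
  rw [dotProduct_single] at hle
  linarith

theorem eq_zero_of_mem_polar {c : Index p q m → ℝ} (hc : ∀ y ∈ P.dirLinCone zs d, c ⬝ᵥ y ≤ 0)
    {i : Fin m} (hi : i ∈ P.IGHd zs d) :
    c (.inr (.inr (.inl i))) = 0 ∧ c (.inr (.inr (.inr i))) = 0 := by
  have hG (r : ℝ) := hc _ (single_G_mem_dirLinCone hi r)
  have hH (r : ℝ) := hc _ (single_H_mem_dirLinCone hi r)
  simp only [dotProduct_single] at hG hH
  constructor
  · linarith [hG 1, hG (-1)]
  · linarith [hH 1, hH (-1)]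

theorem sum_smul_constrGrad {c : Index p q m → ℝ} (hc : ∀ k ∉ P.dirActive zs d, c k = 0) :
    ∑ k, c k • P.constrGrad k zs =
      (∑ i ∈ Finset.univ.filter (fun i ↦ i ∈ P.Igd zs d), c (.inl i) • P.g' i zs) +
      (∑ j, c (.inr (.inl j)) • P.h' j zs) +
      ∑ i, (c (.inr (.inr (.inl i))) • P.G' i zs + c (.inr (.inr (.inr i))) • P.H' i zs) := by
  have hg : ∑ i ∈ Finset.univ.filter (fun i ↦ i ∈ P.Igd zs d), c (.inl i) • P.g' i zs =
      ∑ i, c (.inl i) • P.g' i zs := by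
    refine Finset.sum_filter_of_ne fun i _ hne ↦ ?_
    by_contra hi
    exact hne (by rw [hc (.inl i) hi, zero_smul])
  simp only [Fintype.sum_sum_type, constrGrad, hg, Finset.sum_add_distrib, add_assoc]

end MPSC

/-- a local minimizer satisfying MPSC-LICQ(d) for a critical direction `d`
is S-stationary in direction `d`. -/
theorem mpsc_LICQd_S_stationary_dir {n p q m : ℕ} (P : MPSC n p q m) (zs : Euc n)
    (hfeas : zs ∈ P.Feas) (hmin : IsLocalMinOn P.f P.Feas zs)
    (d : Euc n) (hd : d ∈ P.Crit zs) (hlicq : P.LICQd zs d) :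
    P.SStatDir zs d := by
  obtain ⟨c, hsupp, hsum, hpolar⟩ := MPSC.exists_multipliers_of_isLocalMinOn hfeas hmin hd hlicq
  have hGH (i) (hi : i ∈ P.IGHd zs d) := MPSC.eq_zero_of_mem_polar hpolar hi
  refine ⟨fun i ↦ c (.inl i), fun j ↦ c (.inr (.inl j)), fun i ↦ c (.inr (.inr (.inl i))),
    fun i ↦ c (.inr (.inr (.inr i))), ⟨?_, ?_, ?_, ?_, ?_, ?_⟩, hGH⟩
  · rw [MPSC.sum_smul_constrGrad hsupp, eq_neg_iff_add_eq_zero] at hsum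
    rw [← hsum]
    abel
  · exact fun i _ ↦ MPSC.nonneg_of_mem_polar hpolar i
  · exact fun i hi ↦ hsupp (.inl i) hi
  · exact fun i hi ↦ hsupp _ (MPSC.disjoint_IHs_union_IHd.notMem_of_mem_left hi)
  · exact fun i hi ↦ hsupp _ (MPSC.disjoint_IGs_union_IGd.notMem_of_mem_left hi)
  · exact fun i hi ↦ mul_eq_zero_of_left (hGH i hi).1 _
end
end

section
/- Let z* be a local minimizer of the MPSC and let d ∈ C(z*) be a critical direction. If MPSC quasi-normality holds at z* in direction d, then z* is M-stationary in direction d. -/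
open scoped Classical InnerProductSpace
open Filter Topology

noncomputable section

/-
Let `b` be the set of indices `i` with `G i z* = 0` and `⟪∇G i z*, d⟫ = 0`. The nonlinear program
with equalities `G i = 0` for `i ∈ b` and `H i = 0` for `i ∉ b` has a feasible set contained in
that of the MPSC, its multipliers have the sign pattern of M-multipliers in direction `d`, and it
inherits quasi-normality.

For a quasi-normal nonlinear program the gradient of the residual is bounded away from zero at
infeasible points of a directional neighbourhood: otherwise the normalized violation vectors
cluster at a unit multiplier that quasi-normality forbids. Minimizing the residual plus a small
quadratic then shows that linearized directions near `d` are tangent to the feasible set. Hence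
`⟪∇f z*, v⟫ ≥ 0` whenever `d + s • v` is linearized for small `s > 0`, since `⟪∇f z*, d⟫ ≤ 0`, and
Farkas' lemma gives the multipliers.
-/

section DirectionalNeighborhoods

variable {E : Type*} [NormedAddCommGroup E] [NormedSpace ℝ E] {z d : E}

/-- The filter of directional neighbourhoods of `z` in direction `d`: the points `z + t • u`
with `t ↓ 0` and `u → d`. A property holds frequently along it iff it holds along some
sequence `z + t k • u k` with `t k ↓ 0` and `u k → d`. -/
def dirNhds (z d : E) : Filter E :=
  map (fun p : ℝ × E => z + p.1 • p.2) (𝓝[>] 0 ×ˢ 𝓝 d)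

theorem tendsto_add_smul_dirNhds (z d : E) :
    Tendsto (fun p : ℝ × E => z + p.1 • p.2) (𝓝[>] 0 ×ˢ 𝓝 d) (𝓝 z) := by
  have hfst : Tendsto (fun p : ℝ × E => p.1) (𝓝[>] 0 ×ˢ 𝓝 d) (𝓝 0) :=
    tendsto_fst.mono_right nhdsWithin_le_nhds
  simpa using (hfst.smul tendsto_snd).const_add z

theorem dirNhds_le_nhds (z d : E) : dirNhds z d ≤ 𝓝 z :=
  tendsto_add_smul_dirNhds z d

theorem eventually_dirNhds_iff {P : E → Prop} :
    (∀ᶠ y in dirNhds z d, P y) ↔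
      ∃ δ > 0, ∀ᶠ t : ℝ in 𝓝[>] 0, ∀ y ∈ Metric.ball (z + t • d) (t * δ), P y := by
  rw [dirNhds, eventually_map, eventually_prod_iff]
  constructor
  · rintro ⟨Q, hQ, B, hB, hP⟩
    obtain ⟨δ, hδ, hball⟩ := Metric.eventually_nhds_iff_ball.1 hB
    refine ⟨δ, hδ, ?_⟩
    filter_upwards [hQ, self_mem_nhdsWithin] with t hQt (ht : 0 < t) y hy
    have hdir : t⁻¹ • (y - z) ∈ Metric.ball d δ := by
      have hsplit : t⁻¹ • (y - z) - d = t⁻¹ • (y - (z + t • d)) := by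
        rw [← sub_sub, smul_sub t⁻¹ (y - z), inv_smul_smul₀ ht.ne']
      rw [mem_ball_iff_norm] at hy ⊢
      rwa [hsplit, norm_smul, norm_inv, Real.norm_of_nonneg ht.le, inv_mul_lt_iff₀ ht]
    simpa [smul_inv_smul₀ ht.ne'] using hP hQt (hball _ hdir)
  · rintro ⟨δ, hδ, h⟩
    refine ⟨_, h.and self_mem_nhdsWithin, _, Metric.ball_mem_nhds d hδ, ?_⟩
    rintro t ⟨hP, ht : 0 < t⟩ u hu
    refine hP _ ?_
    have hu' : ‖u - d‖ < δ := mem_ball_iff_norm.1 hu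
    rw [mem_ball_iff_norm, add_sub_add_left_eq_sub, ← smul_sub, norm_smul,
      Real.norm_of_nonneg ht.le]
    gcongr

theorem frequently_dirNhds_iff {P : E → Prop} :
    (∃ᶠ y in dirNhds z d, P y) ↔
      ∀ δ > 0, ∃ᶠ t : ℝ in 𝓝[>] 0, ∃ y ∈ Metric.ball (z + t • d) (t * δ), P y := by
  simp only [Filter.Frequently, eventually_dirNhds_iff]
  push Not
  rfl

theorem eventually_eventually_dirNhds {P : E → Prop} (h : ∀ᶠ y in dirNhds z d, P y) :
    ∀ᶠ u in 𝓝 d, ∀ᶠ y in dirNhds z u, P y := by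
  rw [dirNhds, eventually_map, eventually_prod_iff] at h
  obtain ⟨Q, hQ, B, hB, hP⟩ := h
  filter_upwards [eventually_eventually_nhds.2 hB] with u hu
  exact eventually_map.2 (eventually_prod_iff.2 ⟨Q, hQ, B, hu, hP⟩)

theorem exists_seq_of_frequently_dirNhds {P : E → Prop} (h : ∃ᶠ y in dirNhds z d, P y) :
    ∃ (u : ℕ → E) (t : ℕ → ℝ), Tendsto u atTop (𝓝 d) ∧ (∀ k, 0 < t k) ∧
      Tendsto t atTop (𝓝 0) ∧ ∀ k, P (z + t k • u k) := by
  have hpos : ∀ᶠ p : ℝ × E in 𝓝[>] 0 ×ˢ 𝓝 d, 0 < p.1 :=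
    tendsto_fst.eventually self_mem_nhdsWithin
  obtain ⟨p, hp, hP⟩ := exists_seq_forall_of_frequently ((frequently_map.1 h).and_eventually hpos)
  exact ⟨fun k => (p k).2, fun k => (p k).1, tendsto_snd.comp hp, fun k => (hP k).2,
    (tendsto_fst.comp hp).mono_right nhdsWithin_le_nhds, fun k => (hP k).1⟩

theorem tendsto_dirNhds_slope {F : E → ℝ} {F' : E →L[ℝ] ℝ} (hF : HasFDerivAt F F' z) (d : E) :
    Tendsto (fun p : ℝ × E => (F (z + p.1 • p.2) - F z) / p.1) (𝓝[>] 0 ×ˢ 𝓝 d)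
      (𝓝 (F' d)) := by
  have hstep : Tendsto (fun p : ℝ × E => p.1 • p.2) (𝓝[>] 0 ×ˢ 𝓝 d) (𝓝 0) := by
    simpa using tendsto_add_smul_dirNhds 0 d
  have hdir : Tendsto (fun p : ℝ × E => p.1⁻¹ • p.1 • p.2) (𝓝[>] 0 ×ˢ 𝓝 d) (𝓝 d) := by
    refine tendsto_snd.congr' ?_
    filter_upwards [tendsto_fst.eventually self_mem_nhdsWithin] with p (hp : 0 < p.1)
    exact (inv_smul_smul₀ hp.ne' _).symm
  simpa [div_eq_inv_mul] using
    hF.hasFDerivWithinAt.lim hstep (Eventually.of_forall fun _ => Set.mem_univ _) hdir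

theorem nonneg_of_frequently_dirNhds_pos {F : E → ℝ} {F' : E →L[ℝ] ℝ} (hF : HasFDerivAt F F' z)
    (hz : F z = 0) (hpos : ∃ᶠ y in dirNhds z d, 0 < F y) : 0 ≤ F' d := by
  refine ge_of_tendsto_of_frequently (tendsto_dirNhds_slope hF d) ?_
  refine ((frequently_map.1 hpos).and_eventually
    (tendsto_fst.eventually self_mem_nhdsWithin)).mono ?_
  rintro p ⟨hFp, hp : 0 < p.1⟩
  rw [hz, sub_zero]
  positivity

theorem mem_posTangentConeAt_of_frequently_dirNhds {s : Set E}
    (h : ∃ᶠ y in dirNhds z d, y ∈ s) : d ∈ posTangentConeAt s z := by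
  refine mem_tangentConeAt_of_frequently (𝓝[>] 0 ×ˢ 𝓝 d) (fun p => (p.1⁻¹).toNNReal)
    (fun p : ℝ × E => p.1 • p.2) ?_ (frequently_map.1 h) ?_
  · simpa using tendsto_add_smul_dirNhds 0 d
  · refine tendsto_snd.congr' ?_
    filter_upwards [tendsto_fst.eventually self_mem_nhdsWithin] with p (hp : 0 < p.1)
    rw [NNReal.smul_def, Real.coe_toNNReal _ (inv_nonneg.2 hp.le), inv_smul_smul₀ hp.ne']

end DirectionalNeighborhoods

section Slope

variable {E : Type*} [NormedAddCommGroup E] [InnerProductSpace ℝ E] [ProperSpace E]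
  {R : E → ℝ} {R' : E → E} {ε : ℝ}

-- Minimize `R` plus a quadratic whose gradient on the ball is shorter than `ε`: by the slope
-- bound the minimizer can only be a zero of `R`.
theorem exists_mem_ball_eq_zero_of_slope {y₀ : E} {r : ℝ} (hr : 0 < r) (hR : Continuous R)
    (hnonneg : ∀ y, 0 ≤ R y) (hgrad : ∀ y, R y ≠ 0 → HasGradientAt R (R' y) y)
    (hslope : ∀ y ∈ Metric.ball y₀ r, R y ≠ 0 → ε ≤ ‖R' y‖) (hy₀ : R y₀ < ε * r / 2) :
    ∃ y ∈ Metric.ball y₀ r, R y = 0 := by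
  have hε : 0 < ε := by
    have := (hnonneg y₀).trans_lt hy₀
    by_contra! h
    nlinarith
  set a : ℝ := ε / (2 * r) with ha
  have ha_pos : 0 < a := by positivity
  have har : ε * r / 2 = a * r ^ 2 := by rw [ha]; field_simp
  obtain ⟨y, -, hmin⟩ := (isCompact_closedBall y₀ r).exists_isMinOn
    ⟨y₀, Metric.mem_closedBall_self hr.le⟩
    (f := fun y => R y + a * ‖y - y₀‖ ^ 2) (by fun_prop)
  have hle : R y + a * ‖y - y₀‖ ^ 2 ≤ R y₀ := by
    simpa using hmin (Metric.mem_closedBall_self hr.le)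
  have hlt : ‖y - y₀‖ < r := by
    refine lt_of_pow_lt_pow_left₀ 2 hr.le ?_
    have := hnonneg y
    exact lt_of_mul_lt_mul_left (by linarith) ha_pos.le
  have hy : y ∈ Metric.ball y₀ r := mem_ball_iff_norm.2 hlt
  refine ⟨y, hy, by_contra fun hRy => ?_⟩
  have hsq : HasFDerivAt (fun y => a * ‖y - y₀‖ ^ 2) (a • 2 • innerSL ℝ (y - y₀)) y := by
    simpa using ((hasFDerivAt_id y).sub_const y₀).norm_sq.const_mul a
  have hcrit : R' y = -((2 * a) • (y - y₀)) := by
    have hlocal := hmin.isLocalMin (Filter.mem_of_superset (Metric.isOpen_ball.mem_nhds hy)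
      Metric.ball_subset_closedBall)
    have hzero := hlocal.hasFDerivAt_eq_zero ((hgrad y hRy).hasFDerivAt.add hsq)
    refine ext_inner_right ℝ fun v => ?_
    have := congrArg (fun L : E →L[ℝ] ℝ => L v) hzero
    simp only [map_sub, add_apply, InnerProductSpace.toDual_apply_apply, smul_apply, sub_apply,
      coe_innerSL_apply, nsmul_eq_mul, Nat.cast_ofNat, smul_eq_mul, zero_apply, inner_neg_left,
      inner_smul_left, Real.ringHom_apply, inner_sub_left] at this ⊢
    linarith
  have hnorm : ‖R' y‖ < ε := by
    rw [hcrit, norm_neg, norm_smul, Real.norm_of_nonneg (by positivity)]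
    calc 2 * a * ‖y - y₀‖ < 2 * a * r := by gcongr
      _ = ε := by rw [ha]; field_simp
  exact (hslope y hy hRy).not_gt hnorm

theorem frequently_dirNhds_eq_zero_of_slope {z d : E} (hε : 0 < ε) (hR : Continuous R)
    (hnonneg : ∀ y, 0 ≤ R y) (hgrad : ∀ y, R y ≠ 0 → HasGradientAt R (R' y) y)
    (hslope : ∀ᶠ y in dirNhds z d, R y ≠ 0 → ε ≤ ‖R' y‖)
    (hd : Tendsto (fun t : ℝ => R (z + t • d) / t) (𝓝[>] 0) (𝓝 0)) :
    ∃ᶠ y in dirNhds z d, R y = 0 := by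
  obtain ⟨δ₀, hδ₀, hball⟩ := eventually_dirNhds_iff.1 hslope
  refine frequently_dirNhds_iff.2 fun δ hδ => Eventually.frequently ?_
  have hmin : 0 < min δ₀ δ := lt_min hδ₀ hδ
  filter_upwards [hball, self_mem_nhdsWithin,
    hd.eventually (gt_mem_nhds (show 0 < ε * min δ₀ δ / 2 by positivity))]
    with t hslope_t (ht : 0 < t) hsmall
  have hsub {η : ℝ} (hη : min δ₀ δ ≤ η) :
      Metric.ball (z + t • d) (t * min δ₀ δ) ⊆ Metric.ball (z + t • d) (t * η) :=
    Metric.ball_subset_ball (by gcongr)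
  obtain ⟨y, hy, hRy⟩ := exists_mem_ball_eq_zero_of_slope (mul_pos ht hmin) hR hnonneg hgrad
    (fun y hy => hslope_t y (hsub (min_le_left _ _) hy))
    (by rw [div_lt_iff₀ ht] at hsmall; linarith)
  exact ⟨y, hsub (min_le_right _ _) hy, hRy⟩

end Slope

section Farkas

variable {𝕜 V ι : Type*} [Field 𝕜] [LinearOrder 𝕜] [AddCommGroup V] [Module 𝕜 V]

theorem exists_multiplier_insert {eq : Set ι} {s : Finset ι} {a : ι → Module.Dual 𝕜 V}
    {b : Module.Dual 𝕜 V} {j : ι} {μ : ι → 𝕜} {r : 𝕜} (hj : j ∉ s) (hμ : ∀ i ∉ eq, 0 ≤ μ i)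
    (hr : j ∉ eq → 0 ≤ r) (hb : b = r • a j + ∑ i ∈ s, μ i • a i) :
    ∃ ν : ι → 𝕜, (∀ i ∉ eq, 0 ≤ ν i) ∧ b = ∑ i ∈ insert j s, ν i • a i := by
  refine ⟨Function.update μ j r, fun i hi => ?_, ?_⟩
  · rcases eq_or_ne i j with rfl | hij
    · simpa using hr hi
    · simpa [hij] using hμ i hi
  · rw [Finset.sum_insert hj, Function.update_self, hb]
    congr 1
    refine Finset.sum_congr rfl fun i hi => ?_
    rw [Function.update_of_ne (ne_of_mem_of_not_mem hi hj)]

variable [IsStrictOrderedRing 𝕜]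

theorem exists_multiplier_of_forall_nonpos (eq : Set ι) (s : Finset ι) (a : ι → Module.Dual 𝕜 V)
    (b : Module.Dual 𝕜 V)
    (h : ∀ x, (∀ i ∈ s, a i x ≤ 0 ∧ (i ∈ eq → a i x = 0)) → b x ≤ 0) :
    ∃ μ : ι → 𝕜, (∀ i ∉ eq, 0 ≤ μ i) ∧ b = ∑ i ∈ s, μ i • a i := by
  induction s using Finset.induction_on generalizing a b with
  | empty =>
    refine ⟨0, fun _ _ => le_rfl, LinearMap.ext fun x => le_antisymm (by simpa using h x) ?_⟩
    simpa using h (-x)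
  | insert j s hj ih =>
    by_cases hs : ∀ x, (∀ i ∈ s, a i x ≤ 0 ∧ (i ∈ eq → a i x = 0)) → b x ≤ 0
    · obtain ⟨μ, hμ, hb⟩ := ih a b hs
      exact exists_multiplier_insert hj hμ (fun _ => le_rfl) (by rw [zero_smul, zero_add, hb])
    push Not at hs
    obtain ⟨x₀, hx₀, hbx₀⟩ := hs
    have hj₀ : ¬ (a j x₀ ≤ 0 ∧ (j ∈ eq → a j x₀ = 0)) := fun hjx =>
      (h x₀ ((Finset.forall_mem_insert _ _ _).2 ⟨hjx, hx₀⟩)).not_gt hbx₀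
    have hne : a j x₀ ≠ 0 := fun h0 => hj₀ ⟨h0.le, fun _ => h0⟩
    -- Project along `x₀` onto the kernel of `a j`, where the constraint `j` holds for free.
    have hproj (φ : Module.Dual 𝕜 V) (x : V) : (φ - (φ x₀ / a j x₀) • a j) x =
        φ (x - (a j x / a j x₀) • x₀) := by
      simp only [LinearMap.sub_apply, LinearMap.smul_apply, map_sub, map_smul, smul_eq_mul]
      ring
    obtain ⟨μ, hμ, hb⟩ := ih (fun i => a i - (a i x₀ / a j x₀) • a j)
      (b - (b x₀ / a j x₀) • a j) fun x hx => by
        simp only [hproj] at hx ⊢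
        have hker : a j (x - (a j x / a j x₀) • x₀) = 0 := by simp [hne]
        exact h _ ((Finset.forall_mem_insert _ _ _).2 ⟨⟨hker.le, fun _ => hker⟩, hx⟩)
    refine exists_multiplier_insert (r := (b x₀ - ∑ i ∈ s, μ i * a i x₀) / a j x₀) hj hμ
      (fun hjeq => ?_) ?_
    · have hpos : 0 < a j x₀ := not_le.1 fun hle => hj₀ ⟨hle, fun h => absurd h hjeq⟩
      have hsum : ∑ i ∈ s, μ i * a i x₀ ≤ 0 := Finset.sum_nonpos fun i hi => by
        by_cases hieq : i ∈ eq
        · simp [(hx₀ i hi).2 hieq]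
        · exact mul_nonpos_of_nonneg_of_nonpos (hμ i hieq) (hx₀ i hi).1
      exact div_nonneg (by linarith) hpos.le
    · refine (eq_add_of_sub_eq hb).trans ?_
      simp only [smul_sub, Finset.sum_sub_distrib, smul_smul, ← Finset.sum_smul, sub_div,
        Finset.sum_div, mul_div_assoc]
      module

end Farkas

section Excess

variable {isEq : Prop} {x : ℝ}

/-- The signed violation of the scalar constraint `x = 0` (if `isEq` holds) or `x ≤ 0` (if not). -/
def excess (isEq : Prop) (x : ℝ) : ℝ := if isEq then x else max x 0

theorem continuous_excess (isEq : Prop) : Continuous (excess isEq) := by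
  unfold excess
  split_ifs <;> fun_prop

theorem excess_eq_zero_iff : excess isEq x = 0 ↔ x ≤ 0 ∧ (isEq → x = 0) := by
  by_cases h : isEq
  · simpa [excess, h] using le_of_eq
  · simp [excess, h]

theorem excess_nonneg (h : ¬isEq) : 0 ≤ excess isEq x := by simp [excess, h]

theorem excess_div {t : ℝ} (ht : 0 < t) : excess isEq (x / t) = excess isEq x / t := by
  unfold excess
  split_ifs
  · rfl
  · rw [← max_div_div_right ht.le, zero_div]

theorem mul_pos_of_mul_excess_pos {r : ℝ} (h : 0 < r * excess isEq x) : 0 < r * x := by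
  by_cases hEq : isEq
  · simpa [excess, hEq] using h
  · rcases le_total x 0 with hx | hx
    · simp [excess, hEq, hx] at h
    · simpa [excess, hEq, hx] using h

theorem abs_excess_sq_sub_le (x y : ℝ) :
    |excess isEq y ^ 2 - excess isEq x ^ 2 - 2 * excess isEq x * (y - x)| ≤ (y - x) ^ 2 := by
  rw [abs_le]
  by_cases h : isEq
  · simp only [excess, h, if_true]
    constructor <;> nlinarith [sq_nonneg (y - x)]
  · simp only [excess, h, if_false]
    rcases max_cases x 0 with ⟨hx, hx'⟩ | ⟨hx, hx'⟩ <;>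
    rcases max_cases y 0 with ⟨hy, hy'⟩ | ⟨hy, hy'⟩ <;>
    rw [hx, hy] <;> constructor <;> nlinarith [sq_nonneg (y - x)]

theorem hasDerivAt_excess_sq (isEq : Prop) (x : ℝ) :
    HasDerivAt (fun y => excess isEq y ^ 2) (2 * excess isEq x) x := by
  rw [hasDerivAt_iff_isLittleO]
  refine (Asymptotics.IsBigO.of_norm_le fun y => ?_).trans_isLittleO
    (Asymptotics.isLittleO_pow_sub_sub x one_lt_two)
  simpa [mul_comm] using abs_excess_sq_sub_le x y

end Excess

/-- A system of `C¹` constraints on a Hilbert space: `c i y = 0` for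
`i ∈ eqs` and `c i y ≤ 0` for `i ∉ eqs`, with gradients `c' i`. -/
structure ConstraintSystem (E ι : Type*) [NormedAddCommGroup E] [InnerProductSpace ℝ E]
    [CompleteSpace E] where
  eqs : Set ι
  c : ι → E → ℝ
  c' : ι → E → E
  hasGradientAt : ∀ i y, HasGradientAt (c i) (c' i y) y
  continuous_grad : ∀ i, Continuous (c' i)

namespace ConstraintSystem

section Basic

variable {E ι : Type*} [NormedAddCommGroup E] [InnerProductSpace ℝ E] [CompleteSpace E]
  (S : ConstraintSystem E ι) {z d : E} {i : ι}

/-- The feasible set of the system. -/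
def feasible : Set E := {y | ∀ i, S.c i y ≤ 0 ∧ (i ∈ S.eqs → S.c i y = 0)}

/-- The linearization cone of the system at `z`. -/
def linCone (z : E) : Set E :=
  {d | ∀ i, S.c i z = 0 → ⟪S.c' i z, d⟫_ℝ ≤ 0 ∧ (i ∈ S.eqs → ⟪S.c' i z, d⟫_ℝ = 0)}

/-- The constraints that are active at `z` and stay active to first order in direction `d`. -/
def activeDir (z d : E) : Set ι := {i | S.c i z = 0 ∧ ⟪S.c' i z, d⟫_ℝ = 0}

variable {S}

theorem continuous_c (S : ConstraintSystem E ι) (i : ι) : Continuous (S.c i) :=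
  continuous_iff_continuousAt.2 fun y => (S.hasGradientAt i y).continuousAt

theorem eqs_subset_activeDir (hz : z ∈ S.feasible) (hd : d ∈ S.linCone z) :
    S.eqs ⊆ S.activeDir z d := fun i hi =>
  ⟨(hz i).2 hi, (hd i ((hz i).2 hi)).2 hi⟩

theorem mem_activeDir_of_frequently_pos (hz : z ∈ S.feasible) (hd : d ∈ S.linCone z)
    (hpos : ∃ᶠ y in dirNhds z d, 0 < S.c i y) : i ∈ S.activeDir z d := by
  have hactive : S.c i z = 0 := by
    refine le_antisymm (hz i).1 (not_lt.1 fun hlt => ?_)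
    have hneg := ((S.continuous_c i).tendsto z).eventually (gt_mem_nhds hlt)
    obtain ⟨y, hy_pos, hy_neg⟩ :=
      (hpos.and_eventually (hneg.filter_mono (dirNhds_le_nhds z d))).exists
    exact hy_pos.not_gt hy_neg
  refine ⟨hactive, le_antisymm (hd i hactive).1 ?_⟩
  simpa using nonneg_of_frequently_dirNhds_pos (S.hasGradientAt i z).hasFDerivAt hactive hpos

theorem tendsto_excess_div (hz : z ∈ S.feasible) (hd : d ∈ S.linCone z) (i : ι) :
    Tendsto (fun t : ℝ => excess (i ∈ S.eqs) (S.c i (z + t • d)) / t) (𝓝[>] 0) (𝓝 0) := by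
  rcases (hz i).1.lt_or_eq with hlt | hactive
  · have hnotEq : i ∉ S.eqs := fun h => hlt.ne ((hz i).2 h)
    have hline : Tendsto (fun t : ℝ => z + t • d) (𝓝[>] 0) (𝓝 z) :=
      (Continuous.tendsto' (by fun_prop) _ _ (by simp)).mono_left nhdsWithin_le_nhds
    have hneg := (((S.continuous_c i).tendsto z).comp hline).eventually (gt_mem_nhds hlt)
    refine tendsto_const_nhds.congr' ?_
    filter_upwards [hneg] with t (ht : S.c i (z + t • d) < 0)
    rw [excess_eq_zero_iff.2 ⟨ht.le, fun h => absurd h hnotEq⟩, zero_div]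
  · have hslope := (tendsto_dirNhds_slope (S.hasGradientAt i z).hasFDerivAt d).comp
      (tendsto_id.prodMk (tendsto_const_nhds (x := d)))
    have hexcess := ((continuous_excess (i ∈ S.eqs)).tendsto _).comp hslope
    rw [InnerProductSpace.toDual_apply_apply, excess_eq_zero_iff.2 (hd i hactive)] at hexcess
    refine hexcess.congr' ?_
    filter_upwards [self_mem_nhdsWithin] with t (ht : 0 < t)
    simp only [Function.comp_apply, id_eq, hactive, sub_zero, excess_div ht]

theorem eventually_add_smul_mem_linCone [Finite ι] (hz : z ∈ S.feasible) (hd : d ∈ S.linCone z)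
    {v : E} (hv : ∀ i ∈ S.activeDir z d,
      ⟪S.c' i z, v⟫_ℝ ≤ 0 ∧ (i ∈ S.eqs → ⟪S.c' i z, v⟫_ℝ = 0)) :
    ∀ᶠ s : ℝ in 𝓝[>] 0, d + s • v ∈ S.linCone z := by
  refine eventually_all.2 fun i => ?_
  by_cases hi : i ∈ S.activeDir z d
  · filter_upwards [self_mem_nhdsWithin] with s (hs : 0 < s) _
    rw [inner_add_right, inner_smul_right, hi.2, zero_add]
    exact ⟨mul_nonpos_of_nonneg_of_nonpos hs.le (hv i hi).1, fun h => by simp [(hv i hi).2 h]⟩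
  · by_cases hactive : S.c i z = 0
    · have hlt : ⟪S.c' i z, d⟫_ℝ < 0 :=
        (hd i hactive).1.lt_of_ne fun h => hi ⟨hactive, h⟩
      have hline :
          Tendsto (fun s : ℝ => ⟪S.c' i z, d + s • v⟫_ℝ) (𝓝[>] 0) (𝓝 ⟪S.c' i z, d⟫_ℝ) :=
        (Continuous.tendsto' (by fun_prop) _ _ (by simp)).mono_left nhdsWithin_le_nhds
      filter_upwards [hline.eventually (gt_mem_nhds hlt)] with s hs _
      exact ⟨hs.le, fun h => absurd (eqs_subset_activeDir hz hd h) hi⟩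
    · exact Eventually.of_forall fun _ h => absurd h hactive

end Basic

section Violation

variable {E ι : Type*} [NormedAddCommGroup E] [InnerProductSpace ℝ E] [CompleteSpace E]
  (S : ConstraintSystem E ι) {z d : E}

/-- The vector of signed constraint violations at `y`; its Euclidean norm is the residual. -/
def viol (y : E) : EuclideanSpace ℝ ι :=
  WithLp.toLp 2 fun i => excess (i ∈ S.eqs) (S.c i y)

theorem continuous_viol : Continuous S.viol :=
  (PiLp.continuous_toLp 2 _).comp
    (continuous_pi fun i => (continuous_excess _).comp (S.continuous_c i))

theorem viol_eq_zero_iff {S : ConstraintSystem E ι} {y : E} : S.viol y = 0 ↔ y ∈ S.feasible := by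
  rw [viol, WithLp.toLp_eq_zero, funext_iff]
  exact forall_congr' fun i => excess_eq_zero_iff

variable [Fintype ι]

/-- The normalized violation, a unit vector at infeasible points and zero at feasible ones. -/
def violDir (y : E) : EuclideanSpace ℝ ι := ‖S.viol y‖⁻¹ • S.viol y

/-- The gradient of the residual `‖viol ·‖` at an infeasible point. -/
def violGrad (y : E) : E := ∑ i, S.violDir y i • S.c' i y

/-- Quasi-normality of the system at `z` in direction `d`. The sequences of the usual definition
are encoded by a frequently-statement along `dirNhds z d`. -/
def QuasiNormalDir (z d : E) : Prop :=
  ∀ l : ι → ℝ, ∑ i, l i • S.c' i z = 0 → (∀ i ∉ S.eqs, 0 ≤ l i) →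
    (∀ i ∉ S.activeDir z d, l i = 0) →
    (∃ᶠ y in dirNhds z d, ∀ i, l i ≠ 0 → 0 < l i * S.c i y) → l = 0

theorem hasGradientAt_norm_viol {y : E} (hy : S.viol y ≠ 0) :
    HasGradientAt (fun y => ‖S.viol y‖) (S.violGrad y) y := by
  have hsq : HasFDerivAt (fun y => ‖S.viol y‖ ^ 2)
      (∑ i, (2 * S.viol y i) • InnerProductSpace.toDual ℝ E (S.c' i y)) y := by
    simp only [EuclideanSpace.real_norm_sq_eq]
    exact HasFDerivAt.fun_sum fun i _ =>
      (hasDerivAt_excess_sq _ _).comp_hasFDerivAt y (S.hasGradientAt i y).hasFDerivAt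
  have hsqrt := hsq.sqrt (by positivity)
  simp only [Real.sqrt_sq (norm_nonneg _)] at hsqrt
  refine hsqrt.congr_fderiv ?_
  rw [violGrad, map_sum, Finset.smul_sum]
  refine Finset.sum_congr rfl fun i _ => ?_
  rw [map_smul, smul_smul, violDir, PiLp.smul_apply, smul_eq_mul]
  congr 1
  field_simp

variable {S}

theorem norm_violDir {y : E} (hy : S.viol y ≠ 0) : ‖S.violDir y‖ = 1 :=
  norm_smul_inv_norm (𝕜 := ℝ) hy

theorem tendsto_norm_viol_div (hz : z ∈ S.feasible) (hd : d ∈ S.linCone z) :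
    Tendsto (fun t : ℝ => ‖S.viol (z + t • d)‖ / t) (𝓝[>] 0) (𝓝 0) := by
  have hvec : Tendsto (fun t : ℝ => t⁻¹ • S.viol (z + t • d)) (𝓝[>] 0) (𝓝 0) := by
    refine ((PiLp.continuous_toLp 2 _).tendsto' 0 0 (WithLp.toLp_zero 2)).comp
      (tendsto_pi_nhds.2 fun i => ?_)
    simpa [viol, div_eq_inv_mul] using tendsto_excess_div hz hd i
  refine hvec.norm.congr' ?_ |>.trans (by simp)
  filter_upwards [self_mem_nhdsWithin] with t (ht : 0 < t)
  rw [norm_smul, norm_inv, Real.norm_of_nonneg ht.le, div_eq_inv_mul]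

section Limit

variable {U : Filter E} {a : EuclideanSpace ℝ ι}

theorem tendsto_violGrad (hU : U ≤ 𝓝 z) (ha : Tendsto S.violDir U (𝓝 a)) :
    Tendsto S.violGrad U (𝓝 (∑ i, a i • S.c' i z)) :=
  tendsto_finsetSum _ fun i _ =>
    (((PiLp.continuous_apply 2 _ i).tendsto a).comp ha).smul
      (((S.continuous_grad i).tendsto z).mono_left hU)

theorem nonneg_of_tendsto_violDir [U.NeBot] (ha : Tendsto S.violDir U (𝓝 a)) {i : ι}
    (hi : i ∉ S.eqs) : 0 ≤ a i :=
  ge_of_tendsto' (((PiLp.continuous_apply 2 _ i).tendsto a).comp ha) fun _ =>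
    mul_nonneg (inv_nonneg.2 (norm_nonneg _)) (excess_nonneg hi)

theorem eventually_pos_of_tendsto_violDir (ha : Tendsto S.violDir U (𝓝 a)) :
    ∀ᶠ y in U, ∀ i, a i ≠ 0 → 0 < a i * S.c i y := by
  refine eventually_all.2 fun i => eventually_imp_distrib_left.2 fun hi => ?_
  have hlim := (((PiLp.continuous_apply 2 _ i).tendsto a).comp ha).const_mul (a i)
  filter_upwards [hlim.eventually (lt_mem_nhds (mul_self_pos.2 hi))] with y hy
  have hscaled : 0 < a i * ‖S.viol y‖⁻¹ * S.c i y :=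
    mul_pos_of_mul_excess_pos (by simpa [violDir, viol, mul_assoc] using hy)
  rw [mul_right_comm] at hscaled
  exact pos_of_mul_pos_left hscaled (inv_nonneg.2 (norm_nonneg _))

theorem QuasiNormalDir.eq_zero_of_tendsto [U.NeBot] (hqn : S.QuasiNormalDir z d)
    (hz : z ∈ S.feasible) (hd : d ∈ S.linCone z) (hU : U ≤ dirNhds z d)
    (ha : Tendsto S.violDir U (𝓝 a)) (hgrad : Tendsto S.violGrad U (𝓝 0)) : a = 0 := by
  have hpos : ∃ᶠ y in dirNhds z d, ∀ i, a i ≠ 0 → 0 < a i * S.c i y :=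
    (eventually_pos_of_tendsto_violDir ha).frequently.filter_mono hU
  have hsum : ∑ i, a i • S.c' i z = 0 :=
    tendsto_nhds_unique (tendsto_violGrad (hU.trans (dirNhds_le_nhds z d)) ha) hgrad
  have hinactive : ∀ i ∉ S.activeDir z d, a i = 0 := fun i hi => by
    by_contra hai
    have hi_eqs : i ∉ S.eqs := fun h => hi (eqs_subset_activeDir hz hd h)
    exact hi (mem_activeDir_of_frequently_pos hz hd (hpos.mono fun y hy =>
      pos_of_mul_pos_right (hy i hai) (nonneg_of_tendsto_violDir ha hi_eqs)))
  ext i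
  exact congrFun (hqn a hsum (fun i => nonneg_of_tendsto_violDir ha) hinactive hpos) i

end Limit

theorem QuasiNormalDir.exists_slope_bound (hqn : S.QuasiNormalDir z d) (hz : z ∈ S.feasible)
    (hd : d ∈ S.linCone z) :
    ∃ ε > 0, ∀ᶠ y in dirNhds z d, S.viol y ≠ 0 → ε ≤ ‖S.violGrad y‖ := by
  by_contra! hno
  have hcluster : MapClusterPt 0 (dirNhds z d ⊓ 𝓟 {y | S.viol y ≠ 0}) S.violGrad := by
    refine (mapClusterPt_iff_frequently).2 fun s hs => ?_
    obtain ⟨ε, hε, hball⟩ := Metric.mem_nhds_iff.1 hs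
    refine frequently_inf_principal.2 ((hno ε hε).mono fun y hy => ⟨hy.1, hball ?_⟩)
    simpa using hy.2
  obtain ⟨U, hU, hgrad⟩ := mapClusterPt_iff_ultrafilter.1 hcluster
  have hsphere : ∀ᶠ y in (U : Filter E),
      S.violDir y ∈ Metric.sphere (0 : EuclideanSpace ℝ ι) 1 :=
    Filter.mem_of_superset (le_principal_iff.1 (hU.trans inf_le_right)) fun y hy => by
      simpa using norm_violDir hy
  obtain ⟨a, ha_mem, ha⟩ := (isCompact_sphere (0 : EuclideanSpace ℝ ι) 1).ultrafilter_le_nhds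
    (U.map S.violDir) (le_principal_iff.2 hsphere)
  have ha_zero := hqn.eq_zero_of_tendsto hz hd (hU.trans inf_le_left) ha hgrad
  simp [ha_zero] at ha_mem

end Violation

section Optimality

variable {E ι : Type*} [NormedAddCommGroup E] [InnerProductSpace ℝ E] [ProperSpace E] [Fintype ι]
  {S : ConstraintSystem E ι} {z d : E}

theorem QuasiNormalDir.eventually_mem_posTangentConeAt (hqn : S.QuasiNormalDir z d)
    (hz : z ∈ S.feasible) (hd : d ∈ S.linCone z) :
    ∀ᶠ u in 𝓝 d, u ∈ S.linCone z → u ∈ posTangentConeAt S.feasible z := by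
  obtain ⟨ε, hε, hslope⟩ := hqn.exists_slope_bound hz hd
  filter_upwards [eventually_eventually_dirNhds hslope] with u hslope_u hu
  refine mem_posTangentConeAt_of_frequently_dirNhds ?_
  simp only [← viol_eq_zero_iff, ← norm_eq_zero (a := S.viol _)]
  exact frequently_dirNhds_eq_zero_of_slope hε S.continuous_viol.norm (fun _ => norm_nonneg _)
    (fun y hy => S.hasGradientAt_norm_viol (norm_ne_zero_iff.1 hy))
    (hslope_u.mono fun y hy h => hy (norm_ne_zero_iff.1 h)) (tendsto_norm_viol_div hz hu)

theorem QuasiNormalDir.inner_nonneg_of_isLocalMinOn (hqn : S.QuasiNormalDir z d)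
    (hz : z ∈ S.feasible) (hd : d ∈ S.linCone z) {f : E → ℝ} {f' : E}
    (hf : HasGradientAt f f' z) (hmin : IsLocalMinOn f S.feasible z) (hfd : ⟪f', d⟫_ℝ ≤ 0) {v : E}
    (hv : ∀ i ∈ S.activeDir z d, ⟪S.c' i z, v⟫_ℝ ≤ 0 ∧ (i ∈ S.eqs → ⟪S.c' i z, v⟫_ℝ = 0)) :
    0 ≤ ⟪f', v⟫_ℝ := by
  have hline : Tendsto (fun s : ℝ => d + s • v) (𝓝[>] 0) (𝓝 d) :=
    (Continuous.tendsto' (by fun_prop) _ _ (by simp)).mono_left nhdsWithin_le_nhds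
  obtain ⟨s, hlin, htangent, hs⟩ := ((eventually_add_smul_mem_linCone hz hd hv).and
    ((hline.eventually (hqn.eventually_mem_posTangentConeAt hz hd)).and
      self_mem_nhdsWithin)).exists
  have hnonneg : 0 ≤ ⟪f', d + s • v⟫_ℝ := by
    simpa using hmin.hasFDerivWithinAt_nonneg hf.hasFDerivAt.hasFDerivWithinAt (htangent hlin)
  rw [inner_add_right, inner_smul_right] at hnonneg
  exact nonneg_of_mul_nonneg_right (by linarith) hs

theorem QuasiNormalDir.exists_multiplier (hqn : S.QuasiNormalDir z d) (hz : z ∈ S.feasible)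
    (hd : d ∈ S.linCone z) {f : E → ℝ} {f' : E} (hf : HasGradientAt f f' z)
    (hmin : IsLocalMinOn f S.feasible z) (hfd : ⟪f', d⟫_ℝ ≤ 0) :
    ∃ l : ι → ℝ, f' + ∑ i, l i • S.c' i z = 0 ∧ (∀ i ∉ S.eqs, 0 ≤ l i) ∧
      ∀ i ∉ S.activeDir z d, l i = 0 := by
  obtain ⟨μ, hμ, hb⟩ := exists_multiplier_of_forall_nonpos S.eqs
    (Finset.univ.filter (· ∈ S.activeDir z d)) (fun i => innerₛₗ ℝ (S.c' i z)) (-innerₛₗ ℝ f')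
    fun v hv => by
      have := hqn.inner_nonneg_of_isLocalMinOn hz hd hf hmin hfd
        fun i hi => hv i (by simpa using hi)
      simpa using this
  refine ⟨(S.activeDir z d).indicator μ, ext_inner_right ℝ fun v => ?_, fun i hi => ?_,
    fun i hi => Set.indicator_of_notMem hi μ⟩
  · have hbv : -⟪f', v⟫_ℝ = ∑ i with i ∈ S.activeDir z d, μ i * ⟪S.c' i z, v⟫_ℝ := by
      simpa using congrArg (fun φ : Module.Dual ℝ E => φ v) hb
    have hsum : ∑ i, (S.activeDir z d).indicator μ i • S.c' i z =
        ∑ i with i ∈ S.activeDir z d, μ i • S.c' i z := by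
      simp only [Set.indicator_apply, ite_smul, zero_smul, Finset.sum_filter]
    simp only [hsum, inner_add_left, sum_inner, real_inner_smul_left, inner_zero_left]
    linarith
  · exact Set.indicator_apply_nonneg fun _ => hμ i hi

end Optimality

end ConstraintSystem

namespace MPSC

variable {n p q m : ℕ} (P : MPSC n p q m) {zs d : Euc n} {b : Set (Fin m)}

/-- The branch of the MPSC given by `b`: the nonlinear program in which the switching constraint
`G i * H i = 0` is replaced by `G i = 0` for `i ∈ b` and by `H i = 0` for `i ∉ b`. -/
def branch (b : Set (Fin m)) : ConstraintSystem (Euc n) (Fin p ⊕ Fin q ⊕ Fin m) where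
  eqs := Set.range Sum.inr
  c := Sum.elim P.g (Sum.elim P.h fun i => if i ∈ b then P.G i else P.H i)
  c' := Sum.elim P.g' (Sum.elim P.h' fun i => if i ∈ b then P.G' i else P.H' i)
  hasGradientAt := by
    rintro (i | j | i) y
    · exact P.grad_g i y
    · exact P.grad_h j y
    · by_cases hi : i ∈ b
      · simpa [hi] using P.grad_G i y
      · simpa [hi] using P.grad_H i y
  continuous_grad := by
    rintro (i | j | i)
    · exact P.cont_g' i
    · exact P.cont_h' j
    · by_cases hi : i ∈ b
      · simpa [hi] using P.cont_G' i
      · simpa [hi] using P.cont_H' i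

/-- The indices whose `G`-constraint is active at `zs` and stays active to first order in
direction `d`. For `d` in the linearization cone, the branch of these indices contains `zs`, has
`d` in its linearization cone, and respects the sign pattern of M-multipliers in direction `d`. -/
def dirIndices (zs d : Euc n) : Set (Fin m) := {i | P.G i zs = 0 ∧ ⟪P.G' i zs, d⟫_ℝ = 0}

variable {P}

theorem branch_feasible_subset : (P.branch b).feasible ⊆ P.Feas := fun z hz => by
  refine ⟨fun i => (hz (.inl i)).1, fun j => (hz (.inr (.inl j))).2 ⟨_, rfl⟩, fun i => ?_⟩
  have hi := (hz (.inr (.inr i))).2 ⟨_, rfl⟩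
  by_cases hb : i ∈ b
  · have hG : P.G i z = 0 := by simpa [branch, hb] using hi
    rw [hG, zero_mul]
  · have hH : P.H i z = 0 := by simpa [branch, hb] using hi
    rw [hH, mul_zero]

theorem mem_dirIndices_of_mem (hd : d ∈ P.LinCone zs) {i : Fin m}
    (hi : i ∈ P.IGs zs ∪ P.IGd zs d) : i ∈ P.dirIndices zs d := by
  rcases hi with hi | hi
  · exact ⟨hi.1, hd.2.2.1 i hi⟩
  · exact ⟨hi.1.1, hi.2.1⟩

theorem notMem_dirIndices_of_mem {i : Fin m} (hi : i ∈ P.IHs zs ∪ P.IHd zs d) :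
    i ∉ P.dirIndices zs d := by
  rcases hi with hi | hi
  · exact fun h => hi.1 h.1
  · exact fun h => hi.2.1 h.2

theorem eq_zero_of_notMem_dirIndices (hfeas : zs ∈ P.Feas) (hd : d ∈ P.LinCone zs) {i : Fin m}
    (hi : i ∉ P.dirIndices zs d) : P.H i zs = 0 ∧ ⟪P.H' i zs, d⟫_ℝ = 0 := by
  obtain ⟨-, -, hIGs, hIHs, hIGH⟩ := hd
  by_cases hG : P.G i zs = 0
  · have hGd : ⟪P.G' i zs, d⟫_ℝ ≠ 0 := fun h => hi ⟨hG, h⟩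
    have hH : P.H i zs = 0 := by_contra fun hH => hGd (hIGs i ⟨hG, hH⟩)
    exact ⟨hH, (mul_eq_zero.1 (hIGH i ⟨hG, hH⟩)).resolve_left hGd⟩
  · have hH : P.H i zs = 0 := (mul_eq_zero.1 (hfeas.2.2 i)).resolve_left hG
    exact ⟨hH, hIHs i ⟨hG, hH⟩⟩

theorem mem_branch_feasible (hfeas : zs ∈ P.Feas) (hd : d ∈ P.LinCone zs) :
    zs ∈ (P.branch (P.dirIndices zs d)).feasible := by
  rintro (i | j | i)
  · exact ⟨hfeas.1 i, by simp [branch]⟩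
  · exact ⟨(hfeas.2.1 j).le, fun _ => hfeas.2.1 j⟩
  · have hi : (P.branch (P.dirIndices zs d)).c (.inr (.inr i)) zs = 0 := by
      by_cases hi : i ∈ P.dirIndices zs d
      · simpa [branch, hi] using hi.1
      · simpa [branch, hi] using (eq_zero_of_notMem_dirIndices hfeas hd hi).1
    exact ⟨hi.le, fun _ => hi⟩

theorem mem_branch_linCone (hfeas : zs ∈ P.Feas) (hd : d ∈ P.LinCone zs) :
    d ∈ (P.branch (P.dirIndices zs d)).linCone zs := by
  rintro (i | j | i) hactive
  · exact ⟨hd.1 i hactive, by simp [branch]⟩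
  · exact ⟨(hd.2.1 j).le, fun _ => hd.2.1 j⟩
  · have hi : ⟪(P.branch (P.dirIndices zs d)).c' (.inr (.inr i)) zs, d⟫_ℝ = 0 := by
      by_cases hi : i ∈ P.dirIndices zs d
      · simpa [branch, hi] using hi.2
      · simpa [branch, hi] using (eq_zero_of_notMem_dirIndices hfeas hd hi).2
    exact ⟨hi.le, fun _ => hi⟩

theorem sum_branch_smul_grad (l : Fin p ⊕ Fin q ⊕ Fin m → ℝ) :
    ∑ i, l i • (P.branch b).c' i zs = ∑ i, l (.inl i) • P.g' i zs +
      ∑ j, l (.inr (.inl j)) • P.h' j zs +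
      ∑ i, (b.indicator (fun i => l (.inr (.inr i))) i • P.G' i zs +
        bᶜ.indicator (fun i => l (.inr (.inr i))) i • P.H' i zs) := by
  rw [Fintype.sum_sum_type, Fintype.sum_sum_type, ← add_assoc]
  congr 1
  refine Finset.sum_congr rfl fun i _ => ?_
  by_cases hi : i ∈ b <;> simp [branch, hi]

theorem branch_multiplier_signs (hd : d ∈ P.LinCone zs) {l : Fin p ⊕ Fin q ⊕ Fin m → ℝ}
    (hnonneg : ∀ i ∉ (P.branch b).eqs, 0 ≤ l i)
    (hinactive : ∀ i ∉ (P.branch (P.dirIndices zs d)).activeDir zs d, l i = 0) :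
    (∀ i ∈ P.Igd zs d, 0 ≤ l (.inl i)) ∧ (∀ i ∉ P.Igd zs d, l (.inl i) = 0) ∧
      (∀ i, i ∈ P.IGs zs ∪ P.IGd zs d →
        (P.dirIndices zs d)ᶜ.indicator (fun i => l (.inr (.inr i))) i = 0) ∧
      (∀ i, i ∈ P.IHs zs ∪ P.IHd zs d →
        (P.dirIndices zs d).indicator (fun i => l (.inr (.inr i))) i = 0) ∧
      ∀ i ∈ P.IGHd zs d, (P.dirIndices zs d).indicator (fun i => l (.inr (.inr i))) i *
        (P.dirIndices zs d)ᶜ.indicator (fun i => l (.inr (.inr i))) i = 0 := by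
  refine ⟨fun i _ => hnonneg _ (by simp [branch]), fun i hi => hinactive _ hi,
    fun i hi => Set.indicator_of_notMem (not_not_intro (mem_dirIndices_of_mem hd hi)) _,
    fun i hi => Set.indicator_of_notMem (notMem_dirIndices_of_mem hi) _, fun i hi => ?_⟩
  have hmem : i ∈ P.dirIndices zs d := ⟨hi.1.1, hi.2.1⟩
  exact mul_eq_zero_of_right _ (Set.indicator_of_notMem (not_not_intro hmem) _)

theorem quasiNormalDir_branch (hd : d ∈ P.LinCone zs) (hqn : P.QuasiNormalDir zs d) :
    (P.branch (P.dirIndices zs d)).QuasiNormalDir zs d := by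
  intro l hsum hnonneg hinactive hpos
  obtain ⟨u, t, hu, ht, ht0, hsign⟩ := exists_seq_of_frequently_dirNhds hpos
  obtain ⟨hg, hh, hG, hH⟩ := hqn _ _ _ _ (hsum.symm.trans (sum_branch_smul_grad l))
    (branch_multiplier_signs hd hnonneg hinactive) (by
      refine ⟨u, t, hu, ht, ht0, fun k => ⟨fun i => hsign k (.inl i),
        fun j => hsign k (.inr (.inl j)), fun i hi => ?_, fun i hi => ?_⟩⟩
      · obtain ⟨hmem, hne⟩ := Set.indicator_apply_ne_zero.1 hi
        simpa [branch, hmem] using hsign k (.inr (.inr i)) hne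
      · obtain ⟨hmem, hne⟩ := Set.indicator_apply_ne_zero.1 hi
        rw [Set.mem_compl_iff] at hmem
        simpa [branch, hmem] using hsign k (.inr (.inr i)) hne)
  funext i
  rcases i with i | j | i
  · exact congrFun hg i
  · exact congrFun hh j
  · by_cases hi : i ∈ P.dirIndices zs d
    · simpa [hi] using congrFun hG i
    · simpa [hi] using congrFun hH i

end MPSC

/-- a local minimizer satisfying MPSC quasi-normality in a critical
direction `d` is M-stationary in direction `d`. -/
theorem mpsc_quasiNormal_M_stationary_dir {n p q m : ℕ} (P : MPSC n p q m) (zs : Euc n)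
    (hfeas : zs ∈ P.Feas) (hmin : IsLocalMinOn P.f P.Feas zs)
    (d : Euc n) (hd : d ∈ P.Crit zs) (hqn : P.QuasiNormalDir zs d) :
    P.MStatDir zs d := by
  obtain ⟨hlin, hfd⟩ := hd
  obtain ⟨l, hstat, hnonneg, hinactive⟩ := (MPSC.quasiNormalDir_branch hlin hqn).exists_multiplier
    (MPSC.mem_branch_feasible hfeas hlin) (MPSC.mem_branch_linCone hfeas hlin) (P.grad_f zs)
    (hmin.on_subset MPSC.branch_feasible_subset) hfd
  obtain ⟨hg, hg_inactive, hH, hG, hGH⟩ := MPSC.branch_multiplier_signs hlin hnonneg hinactive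
  refine ⟨_, fun j => l (.inr (.inl j)), _, _, ?_, hg, hg_inactive, hG, hH, hGH⟩
  have hfilter : ∑ i with i ∈ P.Igd zs d, l (.inl i) • P.g' i zs = ∑ i, l (.inl i) • P.g' i zs :=
    Finset.sum_filter_of_ne fun i _ hi =>
      by_contra fun hmem => hi (by rw [hg_inactive i hmem, zero_smul])
  rw [hfilter, ← hstat, MPSC.sum_branch_smul_grad, ← add_assoc, ← add_assoc]
end
end
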